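/- arXiv:0708.2280 — 2 statements merged into one kernel-verified Lean document; each statement's English description precedes it below -/
import Mathlib

section
/- Every finite 3-group G that is an E-group and has order at most 3^10 is nilpotent of class at most 2 (i.e., its derived subgroup is contained in its center). -/
/-- A group is an `E`-group if every element commutes with all of its
endomorphic images. -/
def IsEGroup (G : Type*) [Group G] : Prop :=
  ∀ (φ : G →* G) (x : G), x * φ x = φ x * x

namespace EGroupAux

open scoped commutatorElement

/-- The 2-Engel condition: every element commutes with its conjugates. -/
def Eng (G : Type*) [Group G] : Prop := ∀ x g : G, Commute x (g * x * g⁻¹)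

theorem ring_aux {R : Type*} [Ring R] (Y Z : R) (hY : Y * Y = 0) (hZ : Z * Z = 0)
    (h : (Y * Z + Y + Z) * (Y * Z + Y + Z) = 0) : Y * Z + Z * Y = 0 := by
  have e : Y * Z * Y * Z + Y * Z * Y + Z * Y * Z + Y * Z + Z * Y = 0 := by
    have : (Y * Z + Y + Z) * (Y * Z + Y + Z) =
        Y * Z * Y * Z + Y * Z * Y + Z * Y * Z + Y * Z + Z * Y
        + Y * (Z * Z) + (Y * Y) * Z + Y * Y + Z * Z := by noncomm_ring
    rw [this, hY, hZ] at h
    simpa using h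
  have e1 : Y * Z * Y * Z + Y * Z * Y = 0 := by
    have : Y * (Y * Z * Y * Z + Y * Z * Y + Z * Y * Z + Y * Z + Z * Y) =
      (Y * Y) * (Z * Y * Z + Z * Y + Z) + (Y * Z * Y * Z + Y * Z * Y) := by noncomm_ring
    rw [e, hY] at this
    simpa using this.symm
  have e2 : Y * Z * Y * Z = 0 := by
    have : (Y * Z * Y * Z + Y * Z * Y) * Z = Y * Z * Y * (Z * Z) + Y * Z * Y * Z := by noncomm_ring
    rw [e1, hZ] at this
    simpa using this.symm
  have e3 : Y * Z * Y = 0 := by simpa [e2] using e1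
  have e4 : Z * Y * Z = 0 := by
    have : (Y * Z * Y * Z + Y * Z * Y + Z * Y * Z + Y * Z + Z * Y) * Z =
      (Y * Z * Y + Z * Y + Y) * (Z * Z) + Y * Z * Y * Z + Z * Y * Z := by noncomm_ring
    rw [e, hZ, e2] at this
    simpa using this.symm
  simpa [e2, e3, e4] using e

section engel
variable {G : Type*} [Group G]

theorem Eng.comm_left (h : Eng G) (y a : G) : Commute y ⁅y, a⁆ := by
  have h1 : Commute y (a * y * a⁻¹)⁻¹ := (h y a).inv_right
  have : ⁅y, a⁆ = y * (a * y * a⁻¹)⁻¹ := by rw [commutatorElement_def]; group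
  rw [this]
  exact (Commute.refl y).mul_right h1

theorem Eng.comm_right (h : Eng G) (y a : G) : Commute y ⁅a, y⁆ := by
  rw [← commutatorElement_inv]
  exact (h.comm_left y a).inv_right

theorem Eng.self (h : Eng G) (y a : G) : ⁅y, ⁅y, a⁆⁆ = 1 :=
  commutatorElement_eq_one_iff_commute.2 (h.comm_left y a)

theorem Eng.self' (h : Eng G) (y a : G) : ⁅y, ⁅a, y⁆⁆ = 1 :=
  commutatorElement_eq_one_iff_commute.2 (h.comm_right y a)

theorem Eng.inv_right (h : Eng G) (y a : G) : ⁅y, a⁻¹⁆ = ⁅y, a⁆⁻¹ := by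
  have h1 : Commute a ⁅y, a⁆⁻¹ := (h.comm_right a y).inv_right
  have : ⁅y, a⁻¹⁆ = a⁻¹ * ⁅y, a⁆⁻¹ * a := by simp only [commutatorElement_def]; group
  rw [this, mul_assoc, ← h1.eq]; group

theorem Eng.swap_right (h : Eng G) (x y z : G) : ⁅x, ⁅y, z⁆⁆ = ⁅x, ⁅z, y⁆⁆⁻¹ := by
  rw [← h.inv_right, commutatorElement_inv]

theorem Eng.pow_left (h : Eng G) (x y : G) (n : ℕ) : ⁅x ^ n, y⁆ = ⁅x, y⁆ ^ n := by
  induction n with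
  | zero => simp
  | succ n ih =>
    have h1 : Commute (x ^ n) ⁅x, y⁆ := (h.comm_left x y).pow_left n
    have : ⁅x ^ (n + 1), y⁆ = x ^ n * ⁅x, y⁆ * (x ^ n)⁻¹ * ⁅x ^ n, y⁆ := by
      simp only [commutatorElement_def, pow_succ]; group
    rw [this, h1.eq, ih, pow_succ']; group

theorem Eng.swap_left (h : Eng G) (x y z : G) : ⁅y, ⁅z, x⁆⁆ = ⁅z, ⁅y, x⁆⁆⁻¹ := by
  let A := Subgroup.normalClosure ({x} : Set G)
  have hcomm : ∀ a b : A, a * b = b * a := by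
    have : ∀ a ∈ Group.conjugatesOfSet ({x} : Set G), ∀ b ∈ Group.conjugatesOfSet ({x} : Set G),
        a * b = b * a := by
      intro a ha b hb
      simp only [Group.mem_conjugatesOfSet_iff, Set.mem_singleton_iff, exists_eq_left,
        isConj_iff] at ha hb
      obtain ⟨c, rfl⟩ := ha
      obtain ⟨d, rfl⟩ := hb
      have := h (c * x * c⁻¹) (d * c⁻¹)
      have e : d * c⁻¹ * (c * x * c⁻¹) * (d * c⁻¹)⁻¹ = d * x * d⁻¹ := by group
      rw [e] at this
      exact this.eq
    exact (Subgroup.isMulCommutative_closure this).is_comm.comm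
  let _ : CommGroup A := { (inferInstance : Group A) with mul_comm := hcomm }
  let ρ : G → AddMonoid.End (Additive A) :=
    fun g => MonoidHom.toAdditive (MulAut.conjNormal (H := A) g).toMonoidHom
  have hρ : ∀ (g : G) (a : A), ((Additive.toMul ((ρ g) (Additive.ofMul a)) : A) : G)
      = g * a * g⁻¹ := by
    intro g a
    exact MulAut.conjNormal_apply g a
  have hρ1 : ∀ (g : G) (a : A), ((Additive.toMul ((ρ g - 1) (Additive.ofMul a)) : A) : G)
      = ⁅g, (a : G)⁆ := by
    intro g a
    have : ((Additive.toMul ((ρ g - 1) (Additive.ofMul a)) : A) : G)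
      = ((Additive.toMul ((ρ g) (Additive.ofMul a)) : A) : G) * (a : G)⁻¹ := by
      have e := AddMonoidHom.sub_apply (ρ g : Additive A →+ Additive A) (AddMonoidHom.id _)
        (Additive.ofMul a)
      have e' := congrArg (fun t : Additive A => ((Additive.toMul t : A) : G)) e
      refine Eq.trans e' ?_
      simp [div_eq_mul_inv]
      rfl
    rw [this, hρ, commutatorElement_def]
  have hρ2 : ∀ (g k : G) (a : A),
      ((Additive.toMul (((ρ g - 1) * (ρ k - 1)) (Additive.ofMul a)) : A) : G)
      = ⁅g, ⁅k, (a : G)⁆⁆ := by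
    intro g k a
    have := hρ1 g (Additive.toMul ((ρ k - 1) (Additive.ofMul a)))
    rw [hρ1 k a] at this
    exact this
  have hsq : ∀ g, (ρ g - 1) * (ρ g - 1) = 0 := by
    intro g
    ext a
    have := hρ2 g g (Additive.toMul a)
    rw [h.self] at this
    exact this
  have hmul : ∀ g k, ρ (g * k) = ρ g * ρ k := by
    intro g k
    ext a
    have h1 := hρ (g * k) (Additive.toMul a)
    have h2 := hρ g (Additive.toMul ((ρ k) a))
    have h3 := hρ k (Additive.toMul a)
    have h4 : ((Additive.toMul ((ρ k) a) : A) : G) = k * (Additive.toMul a : A) * k⁻¹ := h3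
    rw [h4] at h2
    refine (h1.trans ?_).trans h2.symm
    group
  have key := ring_aux (ρ y - 1) (ρ z - 1) (hsq y) (hsq z) (by
    have e : (ρ y - 1) * (ρ z - 1) + (ρ y - 1) + (ρ z - 1) = ρ (y * z) - 1 := by
      rw [hmul, sub_mul, mul_sub, one_mul, mul_one]; abel
    rw [e]; exact hsq _)
  let a : A := ⟨x, Subgroup.subset_normalClosure rfl⟩
  have h1 := hρ2 y z a
  have h2 := hρ2 z y a
  have h3 : ((Additive.toMul (((ρ y - 1) * (ρ z - 1)) (Additive.ofMul a)) : A) : G) *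
     ((Additive.toMul (((ρ z - 1) * (ρ y - 1)) (Additive.ofMul a)) : A) : G) = 1 := by
    have := DFunLike.congr_fun key (Additive.ofMul a)
    exact congrArg (fun t : Additive A => ((Additive.toMul t : A) : G)) this
  rw [h1, h2] at h3
  exact eq_inv_of_mul_eq_one_left h3

theorem Eng.cyc (h : Eng G) (x y z : G) : ⁅x, ⁅y, z⁆⁆ = ⁅y, ⁅z, x⁆⁆ := by
  rw [h.swap_left z x y, h.swap_right y x z, inv_inv]

/-- class at most three -/
theorem Eng.class3 (h : Eng G) (h3 : IsPGroup 3 G) (a b c d : G) : ⁅a, ⁅b, ⁅c, d⁆⁆⁆ = 1 := by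
  -- `F a b c d` is alternating in all variables
  have s1 : ∀ a b c d : G, ⁅a, ⁅b, ⁅c, d⁆⁆⁆ = ⁅b, ⁅a, ⁅c, d⁆⁆⁆⁻¹ :=
    fun a b c d => h.swap_left _ _ _
  have s2 : ∀ a b c d : G, ⁅a, ⁅b, ⁅c, d⁆⁆⁆ = ⁅a, ⁅c, ⁅b, d⁆⁆⁆⁻¹ := by
    intro a b c d
    rw [h.swap_left d b c, h.inv_right]
  have s3 : ∀ a b c d : G, ⁅a, ⁅b, ⁅c, d⁆⁆⁆ = ⁅a, ⁅b, ⁅d, c⁆⁆⁆⁻¹ := by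
    intro a b c d
    rw [h.swap_right b c d, h.inv_right]
  have e1 : ∀ a b c d : G, ⁅a, ⁅b, ⁅c, d⁆⁆⁆ = ⁅⁅c, d⁆, ⁅a, b⁆⁆ := by
    intro a b c d
    rw [h.cyc ⁅c, d⁆ a b]
  have e2 : ⁅a, ⁅b, ⁅c, d⁆⁆⁆ = ⁅c, ⁅d, ⁅a, b⁆⁆⁆⁻¹ := by
    rw [e1 a, e1 c, commutatorElement_inv]
  have e3 : ⁅a, ⁅b, ⁅c, d⁆⁆⁆ = ⁅c, ⁅d, ⁅a, b⁆⁆⁆ := by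
    rw [s2 a b c d, s1 a c b d, s3 c a b d, s2 c a d b]
    simp
  set f := ⁅a, ⁅b, ⁅c, d⁆⁆⁆ with hf
  have hff : f ^ 2 = 1 := by
    rw [pow_two]
    nth_rewrite 1 [e2]
    rw [e3]; exact inv_mul_cancel _
  obtain ⟨k, hk⟩ := h3 f
  have hco : Nat.Coprime 2 (3 ^ k) := Nat.Coprime.pow_right k (by norm_num)
  have hd := Nat.dvd_gcd (orderOf_dvd_of_pow_eq_one hff) (orderOf_dvd_of_pow_eq_one hk)
  rw [hco.gcd_eq_one] at hd
  exact orderOf_eq_one_iff.1 (Nat.dvd_one.1 hd)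

end engel

section central
variable {G : Type*} [Group G]

theorem central_of_hom (hE : IsEGroup G) (m : ℕ) (f : G →* Multiplicative (ZMod m))
    (g0 : G) (hg0 : f g0 = Multiplicative.ofAdd 1) (u : G) (hu : u ^ m = 1) (h : G) :
    Commute h u := by
  let ψ : Multiplicative (ZMod m) →* G :=
    AddMonoidHom.toMultiplicativeLeft (ZMod.lift m ⟨zmultiplesHom (Additive G) (Additive.ofMul u), by
      simp [← ofMul_pow, hu]⟩)
  have hψ : ψ (Multiplicative.ofAdd 1) = u := by
    have : (ZMod.lift m ⟨zmultiplesHom (Additive G) (Additive.ofMul u), by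
      simp [← ofMul_pow, hu]⟩) ((1 : ℤ) : ZMod m) = Additive.ofMul u := by
      rw [ZMod.lift_coe]; simp
    rw [Int.cast_one] at this
    exact this
  have key : ∀ g, f g = Multiplicative.ofAdd 1 → Commute g u := by
    intro g hg
    have := hE (ψ.comp f) g
    rw [MonoidHom.comp_apply, hg, hψ] at this
    exact this
  obtain ⟨a, ha⟩ := ZMod.intCast_surjective (Multiplicative.toAdd (f h))
  have ha' : f h = (Multiplicative.ofAdd (1 : ZMod m)) ^ a := by
    rw [← ofAdd_zsmul]
    simp [ha]
  have h1 : Commute (h * g0 ^ (1 - a)) u := by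
    apply key
    rw [map_mul, map_zpow, hg0, ha', ← zpow_add]
    simp
  have h2 : Commute (g0 ^ (1 - a)) u := (key g0 hg0).zpow_left _
  have := h1.mul_left h2.inv_left
  simpa using this

theorem exists_n [Finite G] (h3 : IsPGroup 3 G) (hE : IsEGroup G) :
    ∃ n : ℕ, (∀ g : G, g ^ n ∈ commutator G) ∧
      ∀ u : G, u ^ n = 1 → u ∈ Subgroup.center G := by
  classical
  have hex : ∃ k : ℕ, ∀ g : G, g ^ (3 ^ k) ∈ commutator G := by
    obtain ⟨k, hk⟩ := IsPGroup.iff_card.1 h3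
    exact ⟨k, fun g => by rw [← hk, pow_card_eq_one']; exact one_mem _⟩
  refine ⟨3 ^ Nat.find hex, Nat.find_spec hex, fun u hu => ?_⟩
  rcases hk : Nat.find hex with _ | k
  · rw [hk] at hu
    have : u = 1 := by simpa using hu
    rw [this]; exact one_mem _
  · have hmin := Nat.find_min hex (m := k) (by omega)
    push Not at hmin
    obtain ⟨g, hg⟩ := hmin
    obtain ⟨ι, _, n, hn, ⟨e⟩⟩ := CommGroup.equiv_prod_multiplicative_zmod_of_finite (Abelianization G)
    let q : G →* Abelianization G := Abelianization.of
    have hq : q (g ^ 3 ^ k) ≠ 1 := by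
      intro h
      apply hg
      rw [← Abelianization.ker_of]
      exact h
    have : ∃ i, e (q (g ^ 3 ^ k)) i ≠ 1 := by
      by_contra hcon
      push Not at hcon
      apply hq
      apply e.injective
      rw [map_one]
      funext i
      exact hcon i
    obtain ⟨i, hi⟩ := this
    let f0 : G →* Multiplicative (ZMod (n i)) :=
      ((Pi.evalMonoidHom (fun i => Multiplicative (ZMod (n i))) i).comp e.toMonoidHom).comp q
    have hf0 : Function.Surjective f0 := by
      have a1 : Function.Surjective
          (Function.eval i : (∀ i, Multiplicative (ZMod (n i))) → _) := Function.surjective_eval i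
      have a2 : Function.Surjective q := QuotientGroup.mk_surjective
      exact (a1.comp e.surjective).comp a2
    obtain ⟨g0, hg0⟩ := hf0 (Multiplicative.ofAdd 1)
    have hp : ∀ j : ℕ, f0 (g0 ^ j) = Multiplicative.ofAdd (j : ZMod (n i)) := by
      intro j
      rw [map_pow, hg0, ← ofAdd_nsmul]; simp
    obtain ⟨N, hN⟩ := h3 g0
    have hdN : n i ∣ 3 ^ N := by
      have := hp (3 ^ N)
      rw [hN, map_one] at this
      rw [← ZMod.natCast_eq_zero_iff]
      exact (Multiplicative.ofAdd.injective this).symm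
    obtain ⟨j, hj, hjn⟩ := (Nat.dvd_prime_pow Nat.prime_three).1 hdN
    have hkj : k + 1 ≤ j := by
      by_contra hlt
      apply hi
      have hd : n i ∣ 3 ^ k := by rw [hjn]; exact pow_dvd_pow _ (by omega)
      change f0 (g ^ 3 ^ k) = 1
      rw [map_pow]
      obtain ⟨t, ht⟩ := hd
      rw [ht, pow_mul]
      have : (f0 g) ^ (n i) = 1 := by
        apply Multiplicative.toAdd.injective
        rw [toAdd_pow]; simp
      rw [this, one_pow]
    have hd : u ^ (n i) = 1 := by
      obtain ⟨t, ht⟩ : 3 ^ (k + 1) ∣ n i := by rw [hjn]; exact pow_dvd_pow _ hkj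
      rw [ht, pow_mul, ← hk, hu, one_pow]
    rw [Subgroup.mem_center_iff]
    intro h
    exact central_of_hom hE (n i) f0 g0 hg0 u hd h

end central

section main
variable {G : Type*} [Group G]

theorem comm_mul_right {a u v : G} (hv : ⁅a, v⁆ ∈ Subgroup.center G) :
    ⁅a, u * v⁆ = ⁅a, u⁆ * ⁅a, v⁆ := by
  have e : ⁅a, u * v⁆ = ⁅a, u⁆ * (u * ⁅a, v⁆ * u⁻¹) := by
    simp only [commutatorElement_def]; group
  rw [e, Subgroup.mem_center_iff.1 hv u]; group

theorem comm_mul_left {a b u : G} (hb : ⁅b, u⁆ ∈ Subgroup.center G) :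
    ⁅a * b, u⁆ = ⁅a, u⁆ * ⁅b, u⁆ := by
  have e : ⁅a * b, u⁆ = (a * ⁅b, u⁆ * a⁻¹) * ⁅a, u⁆ := by
    simp only [commutatorElement_def]; group
  rw [e, Subgroup.mem_center_iff.1 hb a, Subgroup.mem_center_iff.1 hb ⁅a, u⁆]; group

theorem comm_central {a u : G} (hu : u ∈ Subgroup.center G) : ⁅a, u⁆ = 1 :=
  commutatorElement_eq_one_iff_mul_comm.2 (Subgroup.mem_center_iff.1 hu a)

/-- Induction principle for the derived subgroup. -/
theorem commutator_induction {p : G → Prop} (hg : ∀ a b : G, p ⁅a, b⁆) (h1 : p 1)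
    (hm : ∀ u ∈ commutator G, ∀ v ∈ commutator G, p u → p v → p (u * v))
    (hi : ∀ u ∈ commutator G, p u → p u⁻¹) (u : G) (hu : u ∈ commutator G) : p u := by
  have hu' := hu
  rw [commutator_eq_closure] at hu'
  induction hu' using Subgroup.closure_induction with
  | mem x hx => obtain ⟨a, b, rfl⟩ := hx; exact hg a b
  | one => exact h1
  | mul x y hx hy ihx ihy =>
    rw [← commutator_eq_closure] at hx hy
    exact hm x hx y hy (ihx hx) (ihy hy)
  | inv x hx ihx =>
    rw [← commutator_eq_closure] at hx
    exact hi x hx (ihx hx)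

theorem comm_mem_center (h : Eng G) (h3 : IsPGroup 3 G) (u : G) (hu : u ∈ commutator G) :
    ∀ a : G, ⁅a, u⁆ ∈ Subgroup.center G := by
  refine commutator_induction (p := fun u => ∀ a : G, ⁅a, u⁆ ∈ Subgroup.center G)
    ?_ ?_ ?_ ?_ u hu
  · intro a b c
    rw [Subgroup.mem_center_iff]
    intro d
    exact commutatorElement_eq_one_iff_mul_comm.1 (h.class3 h3 d c a b)
  · intro a; simp [one_mem]
  · intro u _ v _ hu hv a
    rw [comm_mul_right (hv a)]
    exact mul_mem (hu a) (hv a)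
  · intro u _ hu a
    rw [h.inv_right]
    exact inv_mem (hu a)

/-- `u ↦ ⁅a, u⁆` on the derived subgroup. -/
def rhom (hc : ∀ u ∈ commutator G, ∀ a : G, ⁅a, u⁆ ∈ Subgroup.center G) (a : G) :
    commutator G →* G where
  toFun u := ⁅a, (u : G)⁆
  map_one' := by simp
  map_mul' u v := comm_mul_right (hc v v.2 a)

/-- `a ↦ ⁅a, u⁆` for `u` in the derived subgroup. -/
def lhom (hc : ∀ u ∈ commutator G, ∀ a : G, ⁅a, u⁆ ∈ Subgroup.center G)
    (u : G) (hu : u ∈ commutator G) : G →* G where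
  toFun a := ⁅a, u⁆
  map_one' := by simp
  map_mul' a b := comm_mul_left (hc u hu b)

theorem derived_comm (h : Eng G) (h3 : IsPGroup 3 G) (u v : G) (hu : u ∈ commutator G)
    (hv : v ∈ commutator G) : Commute u v := by
  have hc := comm_mem_center h h3
  -- first, `⁅a, b⁆` commutes with the derived subgroup
  have h1 : ∀ a b : G, ∀ v ∈ commutator G, ⁅v, ⁅a, b⁆⁆ = 1 := by
    intro a b v hv
    rw [h.cyc, h.cyc]
    have : ⁅v, a⁆ ∈ Subgroup.center G := by
      rw [← commutatorElement_inv]; exact inv_mem (hc v hv a)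
    exact comm_central this
  refine commutator_induction (p := fun u => Commute u v) ?_ ?_ ?_ ?_ u hu
  · intro a b
    exact (commutatorElement_eq_one_iff_commute.1 (h1 a b v hv)).symm
  · exact Commute.one_left v
  · intro u _ u' _ a b; exact a.mul_left b
  · intro u _ a; exact a.inv_left

theorem pow_inj {w : G} {i j : Fin (orderOf w)} (h : w ^ (i : ℕ) = w ^ (j : ℕ)) : i = j :=
  Fin.ext (pow_injOn_Iio_orderOf i.2 j.2 h)

end main

end EGroupAux

open EGroupAux commutatorElement in
theorem threeEGroup_card_le_three_pow_ten_class_le_two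
    {G : Type*} [Group G] [Finite G] (h3 : IsPGroup 3 G) (hE : IsEGroup G)
    (hcard : Nat.card G ≤ 3 ^ 10) :
    commutator G ≤ Subgroup.center G := by
  by_contra hcon
  have h : Eng G := fun x g => by
    have := hE (MulAut.conj g).toMonoidHom x
    exact this
  have hc := comm_mem_center h h3
  have hD := derived_comm h h3
  obtain ⟨n, hn, hnc⟩ := exists_n h3 hE
  have hmem : ∀ a b : G, ⁅a, b⁆ ∈ commutator G := fun a b =>
    Subgroup.commutator_mem_commutator (Subgroup.mem_top a) (Subgroup.mem_top b)
  obtain ⟨x, y, z, hw1⟩ : ∃ x y z : G, ⁅x, ⁅y, z⁆⁆ ≠ 1 := by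
    by_contra hno
    push Not at hno
    apply hcon
    intro u hu
    refine commutator_induction (p := fun u => u ∈ Subgroup.center G) ?_ ?_ ?_ ?_ u hu
    · intro a b
      rw [Subgroup.mem_center_iff]
      intro d
      exact commutatorElement_eq_one_iff_mul_comm.1 (hno d a b)
    · exact one_mem _
    · intro u _ v _ a b; exact mul_mem a b
    · intro u _ a; exact inv_mem a
  obtain ⟨w, hw⟩ : ∃ w, w = ⁅x, ⁅y, z⁆⁆ := ⟨_, rfl⟩
  rw [← hw] at hw1
  have hm : 3 ≤ orderOf w := by
    obtain ⟨k, hk⟩ := h3 w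
    obtain ⟨j, -, hj⟩ := (Nat.dvd_prime_pow Nat.prime_three).1 (orderOf_dvd_of_pow_eq_one hk)
    rcases j with _ | j
    · exact absurd (orderOf_eq_one_iff.1 (by simpa using hj)) hw1
    · rw [hj, pow_succ]
      have : 0 < 3 ^ j := by positivity
      omega
  have hx1 : ⁅x, ⁅y, z⁆⁆ = w := hw.symm
  have hy2 : ⁅y, ⁅z, x⁆⁆ = w := by rw [hw, h.cyc x y z]
  have hz3 : ⁅z, ⁅x, y⁆⁆ = w := by rw [← hy2, h.cyc y z x]
  have hx2 := h.self' x z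
  have hx3 := h.self x y
  have hy1 := h.self y z
  have hy3 := h.self' y x
  have hz1 := h.self' z y
  have hz2 := h.self z x
  let c1 : commutator G := ⟨⁅y, z⁆, hmem _ _⟩
  let c2 : commutator G := ⟨⁅z, x⁆, hmem _ _⟩
  let c3 : commutator G := ⟨⁅x, y⁆, hmem _ _⟩
  let T := Fin (orderOf w) × Fin (orderOf w) × Fin (orderOf w)
  have hT : Nat.card T = orderOf w ^ 3 := by
    simp only [T, Nat.card_eq_fintype_card, Fintype.card_prod, Fintype.card_fin]; ring
  let Z1 : Subgroup (commutator G) := (Subgroup.center G).subgroupOf (commutator G)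
  have hZk : ∀ a, Z1 ≤ (rhom hc a).ker := by
    intro a u hu
    exact comm_central (Subgroup.mem_subgroupOf.1 hu)
  let F : T → commutator G := fun t => c1 ^ (t.1 : ℕ) * c2 ^ (t.2.1 : ℕ) * c3 ^ (t.2.2 : ℕ)
  have hFx : ∀ t, rhom hc x (F t) = w ^ (t.1 : ℕ) := by
    intro t
    have e1 : rhom hc x c1 = w := hx1
    have e2 : rhom hc x c2 = 1 := hx2
    have e3 : rhom hc x c3 = 1 := hx3
    simp [F, e1, e2, e3]
  have hFy : ∀ t, rhom hc y (F t) = w ^ (t.2.1 : ℕ) := by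
    intro t
    have e1 : rhom hc y c1 = 1 := hy1
    have e2 : rhom hc y c2 = w := hy2
    have e3 : rhom hc y c3 = 1 := hy3
    simp [F, e1, e2, e3]
  have hFz : ∀ t, rhom hc z (F t) = w ^ (t.2.2 : ℕ) := by
    intro t
    have e1 : rhom hc z c1 = 1 := hz1
    have e2 : rhom hc z c2 = 1 := hz2
    have e3 : rhom hc z c3 = w := hz3
    simp [F, e1, e2, e3]
  -- elements equal modulo `Z1` have the same commutators
  have hquot : ∀ (a : G) (u v : commutator G),
      (QuotientGroup.mk u : commutator G ⧸ Z1) = QuotientGroup.mk v →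
      rhom hc a u = rhom hc a v := by
    intro a u v huv
    have := hZk a (QuotientGroup.eq.1 huv)
    rw [MonoidHom.mem_ker, map_mul, map_inv, inv_mul_eq_one] at this
    exact this
  have hFinj : Function.Injective (fun t => (QuotientGroup.mk (F t) : commutator G ⧸ Z1)) := by
    intro s t hst
    have a1 := hquot x _ _ hst
    have a2 := hquot y _ _ hst
    have a3 := hquot z _ _ hst
    rw [hFx, hFx] at a1
    rw [hFy, hFy] at a2
    rw [hFz, hFz] at a3
    exact Prod.ext (pow_inj a1) (Prod.ext (pow_inj a2) (pow_inj a3))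
  have hU : orderOf w ^ 3 ≤ Z1.index := by
    rw [← hT]
    exact Nat.card_le_card_of_injective _ hFinj
  -- the abelianization is large
  have hV : orderOf w ^ 3 ≤ (commutator G).index := by
    rw [← hT]
    let K : T → G := fun t => x ^ (t.1 : ℕ) * y ^ (t.2.1 : ℕ) * z ^ (t.2.2 : ℕ)
    have hq : ∀ (u : G) (hu : u ∈ commutator G) (a b : G),
        (QuotientGroup.mk a : G ⧸ commutator G) = QuotientGroup.mk b →
        lhom hc u hu a = lhom hc u hu b := by
      intro u hu a b hab
      have h1 : a⁻¹ * b ∈ commutator G := QuotientGroup.eq.1 hab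
      have h2 : lhom hc u hu (a⁻¹ * b) = 1 :=
        commutatorElement_eq_one_iff_commute.2 (hD _ _ h1 hu)
      rw [map_mul, map_inv, inv_mul_eq_one] at h2
      exact h2
    have k1 : ∀ t, lhom hc _ c1.2 (K t) = w ^ (t.1 : ℕ) := by
      intro t
      have e1 : lhom hc _ c1.2 x = w := hx1
      have e2 : lhom hc _ c1.2 y = 1 := hy1
      have e3 : lhom hc _ c1.2 z = 1 := hz1
      simp [K, e1, e2, e3]
    have k2 : ∀ t, lhom hc _ c2.2 (K t) = w ^ (t.2.1 : ℕ) := by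
      intro t
      have e1 : lhom hc _ c2.2 x = 1 := hx2
      have e2 : lhom hc _ c2.2 y = w := hy2
      have e3 : lhom hc _ c2.2 z = 1 := hz2
      simp [K, e1, e2, e3]
    have k3 : ∀ t, lhom hc _ c3.2 (K t) = w ^ (t.2.2 : ℕ) := by
      intro t
      have e1 : lhom hc _ c3.2 x = 1 := hx3
      have e2 : lhom hc _ c3.2 y = 1 := hy3
      have e3 : lhom hc _ c3.2 z = w := hz3
      simp [K, e1, e2, e3]
    refine Nat.card_le_card_of_injective
      (fun t => (QuotientGroup.mk (K t) : G ⧸ commutator G)) ?_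
    intro s t hst
    have a1 := hq _ c1.2 _ _ hst
    have a2 := hq _ c2.2 _ _ hst
    have a3 := hq _ c3.2 _ _ hst
    rw [k1, k1] at a1
    rw [k2, k2] at a2
    rw [k3, k3] at a3
    exact Prod.ext (pow_inj a1) (Prod.ext (pow_inj a2) (pow_inj a3))
  -- the power map on the derived subgroup
  let P : commutator G →* commutator G :=
    { toFun := fun u => u ^ n
      map_one' := one_pow n
      map_mul' := fun u v => by
        have : Commute u v := Subtype.ext (hD u v u.2 v.2)
        exact this.mul_pow n }
  have hPk : P.ker ≤ Z1 := by
    intro u hu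
    rw [MonoidHom.mem_ker] at hu
    refine Subgroup.mem_subgroupOf.2 (hnc u ?_)
    exact congrArg Subtype.val hu
  have hPcard : Z1.index ≤ Nat.card P.range := by
    rw [← Subgroup.index_ker]
    exact Nat.le_of_dvd (Nat.pos_of_ne_zero Subgroup.index_ne_zero_of_finite)
      (Subgroup.index_dvd_of_le hPk)
  have hPrange : ∀ S : Subgroup G, (∀ a : G, ∀ u ∈ commutator G, ⁅a, u⁆ ∈ S) →
      ∀ u ∈ commutator G, u ^ n ∈ S := by
    intro S hS u hu
    refine commutator_induction (p := fun u => u ^ n ∈ S) ?_ ?_ ?_ ?_ u hu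
    · intro a b
      rw [← h.pow_left, ← commutatorElement_inv]
      exact inv_mem (hS b _ (hn a))
    · simp [one_mem]
    · intro u hu v hv a b
      rw [(hD u v hu hv).mul_pow]
      exact mul_mem a b
    · intro u _ a
      rw [inv_pow]; exact inv_mem a
  have hZ1card : Z1.index ≤ Nat.card Z1 := by
    refine hPcard.trans (Subgroup.card_le_of_le ?_)
    rintro _ ⟨u, rfl⟩
    exact Subgroup.mem_subgroupOf.2
      (hPrange (Subgroup.center G) (fun a u hu => hc u hu a) u u.2)
  have hcardG : Nat.card Z1 * Z1.index * (commutator G).index = Nat.card G := by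
    rw [Subgroup.card_mul_index, Subgroup.card_mul_index]
  have hU27 : Z1.index ≤ 27 := by
    by_contra hlt
    have hp : ∃ k, Z1.index = 3 ^ k := by
      have hpD := h3.to_subgroup (commutator G)
      obtain ⟨N, hN⟩ := IsPGroup.iff_card.1 hpD
      have hd : Z1.index ∣ 3 ^ N := hN ▸ Z1.index_dvd_card
      obtain ⟨j, -, hj⟩ := (Nat.dvd_prime_pow Nat.prime_three).1 hd
      exact ⟨j, hj⟩
    obtain ⟨k, hk⟩ := hp
    have hk4 : 4 ≤ k := by
      by_contra hk4
      have : 3 ^ k ≤ 3 ^ 3 := Nat.pow_le_pow_right (by norm_num) (by omega)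
      omega
    have h81 : 81 ≤ Z1.index := by
      rw [hk]
      exact (show 81 = 3 ^ 4 by norm_num) ▸ Nat.pow_le_pow_right (by norm_num) hk4
    have h27 : 27 ≤ (commutator G).index :=
      le_trans (by simpa using Nat.pow_le_pow_left hm 3) hV
    have : 81 * 81 * 27 ≤ Nat.card Z1 * Z1.index * (commutator G).index :=
      Nat.mul_le_mul (Nat.mul_le_mul (h81.trans hZ1card) h81) h27
    omega
  have h27 : 27 ≤ orderOf w ^ 3 := by simpa using Nat.pow_le_pow_left hm 3
  have hFsurj : Function.Surjective (fun t => (QuotientGroup.mk (F t) : commutator G ⧸ Z1)) := by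
    refine (Function.Injective.bijective_of_nat_card_le hFinj ?_).2
    rw [hT]
    exact hU27.trans h27
  -- now all triple commutators are powers of `w`
  have hrep : ∀ u : commutator G, ∃ t, ∀ a, rhom hc a u = rhom hc a (F t) := by
    intro u
    obtain ⟨t, ht⟩ := hFsurj (QuotientGroup.mk u)
    exact ⟨t, fun a => hquot a _ _ ht.symm⟩
  have hX : ∀ u ∈ commutator G, ⁅x, u⁆ ∈ Subgroup.zpowers w := by
    intro u hu
    obtain ⟨t, ht⟩ := hrep ⟨u, hu⟩
    have e : ⁅x, u⁆ = w ^ (t.1 : ℕ) := (ht x).trans (hFx t)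
    rw [e]; exact Subgroup.npow_mem_zpowers w _
  have hY : ∀ u ∈ commutator G, ⁅y, u⁆ ∈ Subgroup.zpowers w := by
    intro u hu
    obtain ⟨t, ht⟩ := hrep ⟨u, hu⟩
    have e : ⁅y, u⁆ = w ^ (t.2.1 : ℕ) := (ht y).trans (hFy t)
    rw [e]; exact Subgroup.npow_mem_zpowers w _
  have hZ : ∀ u ∈ commutator G, ⁅z, u⁆ ∈ Subgroup.zpowers w := by
    intro u hu
    obtain ⟨t, ht⟩ := hrep ⟨u, hu⟩
    have e : ⁅z, u⁆ = w ^ (t.2.2 : ℕ) := (ht z).trans (hFz t)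
    rw [e]; exact Subgroup.npow_mem_zpowers w _
  have hall : ∀ a : G, ∀ u ∈ commutator G, ⁅a, u⁆ ∈ Subgroup.zpowers w := by
    intro a u hu
    obtain ⟨t, ht⟩ := hrep ⟨u, hu⟩
    have e : ⁅a, u⁆ = rhom hc a (F t) := ht a
    have e1 : rhom hc a c1 ∈ Subgroup.zpowers w := by
      have : rhom hc a c1 = ⁅y, ⁅z, a⁆⁆ := h.cyc a y z
      rw [this]; exact hY _ (hmem _ _)
    have e2 : rhom hc a c2 ∈ Subgroup.zpowers w := by
      have : rhom hc a c2 = ⁅z, ⁅x, a⁆⁆ := h.cyc a z x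
      rw [this]; exact hZ _ (hmem _ _)
    have e3 : rhom hc a c3 ∈ Subgroup.zpowers w := by
      have : rhom hc a c3 = ⁅x, ⁅y, a⁆⁆ := h.cyc a x y
      rw [this]; exact hX _ (hmem _ _)
    rw [e]
    simp only [F, map_mul, map_pow]
    exact mul_mem (mul_mem (pow_mem e1 _) (pow_mem e2 _)) (pow_mem e3 _)
  have hfin : Nat.card P.range ≤ orderOf w := by
    rw [← Nat.card_zpowers]
    refine Nat.card_le_card_of_injective
      (fun v : P.range => (⟨((v : commutator G) : G), ?_⟩ : Subgroup.zpowers w)) ?_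
    · obtain ⟨v, u, rfl⟩ := v
      exact hPrange _ hall u u.2
    · intro a b hab
      have hab' : ((a : commutator G) : G) = ((b : commutator G) : G) := by
        simpa using hab
      exact Subtype.ext (Subtype.ext hab')
  have hlast : orderOf w ^ 3 ≤ orderOf w := hU.trans (hPcard.trans hfin)
  have : orderOf w * 9 ≤ orderOf w ^ 3 := by
    rw [pow_succ', pow_two]
    exact Nat.mul_le_mul_left _ (Nat.mul_le_mul hm hm)
  omega
end

section
/- For every prime number p, every finite p-group that is an E-group and has order at most p^6 is abelian. -/
section LinearPart

open Matrix Module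

set_option synthInstance.maxHeartbeats 400000 in
set_option synthInstance.maxSize 4000 in
lemma finite_check42 : ∀ a0 b0 : ZMod 2, ¬(a0 = 0 ∧ b0 = 0) → ∀ a1 b1 : ZMod 2, ¬(a1 = 0 ∧ b1 = 0) →
    ¬ (a0 + a1 = 0 ∧ b0 + b1 = 0) →
    ∀ a2 b2 c d : ZMod 2,
    (∀ s t : ZMod 2, ¬ (s*a0+t*a1+a2+s+t*c = 0 ∧ s*b0+t*b1+b2+t*d=0)) →
    ∀ a3 b3 f g : ZMod 2,
    (∀ s t r : ZMod 2, ¬ (s*a0+t*a1+r*a2+a3+r*(s+t*c)+t*f = 0 ∧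
       s*b0+t*b1+r*b2+b3+r*t*d+s+t*g=0)) →
    (∃ s t r k : ZMod 2,
      let qa := s*a0+t*a1+r*a2+k*a3+r*(s+t*c)+k*(t*f)
      let qb := s*b0+t*b1+r*b2+k*b3+r*(t*d)+k*(s+t*g)
      let P : ZMod 2 → ZMod 2 → Prop := fun x y => (x = 0 ∧ y = 0) ∨ (x = qa ∧ y = qb)
      P r k ∧ P (r*c+k*f) (r*d+k*g) ∧ P (s+t*c) (t*d) ∧ P (t*f) (s+t*g) ∧
      ¬ (r = 0 ∧ k = 0 ∧ (r*c+k*f)=0 ∧ (r*d+k*g)=0 ∧ (s+t*c)=0 ∧ (t*d)=0 ∧ (t*f)=0 ∧ (s+t*g)=0)) ∨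
    (∃ s t s' t' : ZMod 2,
      s*a0+t*a1 = s+t*c ∧ s*b0+t*b1 = t*d ∧
      s'*a0+t'*a1 = t'*f ∧ s'*b0+t'*b1 = s'+t'*g ∧
      s'+t'*c = t*f ∧ t'*d = s+t*g ∧ ¬ (s = 0 ∧ t = 0)) := by
  decide +kernel

set_option synthInstance.maxHeartbeats 400000 in
set_option synthInstance.maxSize 4000 in
lemma finite_check32 : ∀ a0 b0 : ZMod 2, ¬(a0 = 0 ∧ b0 = 0) → ∀ a2 b2 : ZMod 2, 
    (∀ s : ZMod 2, ¬ (s*a0+a2+s = 0 ∧ s*b0+b2=0)) →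
    ∀ a3 b3 : ZMod 2,
    (∀ s r : ZMod 2, ¬ (s*a0+r*a2+a3+r*s = 0 ∧ s*b0+r*b2+b3+s=0)) →
    (∃ s r k : ZMod 2,
      let qa := s*a0+r*a2+k*a3+r*s
      let qb := s*b0+r*b2+k*b3+k*s
      let P : ZMod 2 → ZMod 2 → Prop := fun x y => (x = 0 ∧ y = 0) ∨ (x = qa ∧ y = qb)
      P r k ∧ P s 0 ∧ P 0 s ∧ ¬ (r = 0 ∧ k = 0 ∧ s = 0)) := by
  decide +kernel

def good33 (q : Fin 3 → Fin 3 → ZMod 2) (m : Matrix (Fin 3) (Fin 3) (ZMod 2)) : Prop :=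
  ∀ i, m i 0 • q 0 + m i 1 • q 1 + m i 2 • q 2 + ![m i 1 * m i 2, m i 0 * m i 2, m i 0 * m i 1] =
       q i 0 • (m 1 ⨯₃ m 2) + q i 1 • (m 2 ⨯₃ m 0) + q i 2 • (m 0 ⨯₃ m 1)

instance (q : Fin 3 → Fin 3 → ZMod 2) (m : Matrix (Fin 3) (Fin 3) (ZMod 2)) : Decidable (good33 q m) := by
  unfold good33; infer_instance

def l33 : List (Matrix (Fin 3) (Fin 3) (ZMod 2)) := [!![0, 0, 1; 0, 1, 0; 1, 0, 0],
  !![0, 0, 1; 1, 1, 1; 1, 0, 0],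
  !![0, 1, 0; 1, 0, 0; 1, 1, 1],
  !![1, 0, 0; 1, 1, 1; 0, 0, 1],
  !![1, 1, 1; 0, 0, 1; 0, 1, 0],
  !![0, 1, 0; 1, 0, 0; 0, 0, 1],
  !![0, 1, 1; 0, 1, 0; 1, 1, 0],
  !![1, 0, 0; 0, 0, 1; 0, 1, 0],
  !![0, 1, 1; 1, 0, 1; 0, 0, 1],
  !![1, 0, 0; 0, 1, 0; 1, 1, 1],
  !![1, 0, 0; 0, 1, 0; 0, 1, 1],
  !![1, 0, 0; 0, 1, 0; 1, 0, 1],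
  !![1, 0, 0; 0, 1, 1; 0, 0, 1],
  !![1, 0, 0; 1, 0, 1; 1, 1, 0],
  !![1, 0, 0; 1, 1, 0; 0, 0, 1],
  !![1, 0, 0; 1, 1, 0; 1, 0, 1],
  !![1, 0, 1; 0, 1, 0; 0, 0, 1],
  !![1, 0, 1; 0, 1, 1; 0, 0, 1],
  !![1, 1, 0; 0, 1, 0; 0, 0, 1],
  !![1, 1, 0; 0, 1, 0; 0, 1, 1],
  !![1, 1, 1; 0, 1, 0; 0, 0, 1],
  !![0, 0, 1; 0, 1, 0; 1, 0, 1],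
  !![0, 0, 1; 0, 1, 0; 1, 1, 1],
  !![0, 0, 1; 0, 1, 1; 1, 0, 1],
  !![0, 0, 1; 1, 0, 0; 0, 1, 0]]

set_option synthInstance.maxHeartbeats 400000 in
set_option synthInstance.maxSize 4000 in
lemma finite_check33 : ∀ a0 b0 c0 : ZMod 2, ¬(a0 = 0 ∧ b0 = 0 ∧ c0 = 0) →
    ∀ a1 b1 c1 : ZMod 2, (∀ s, ¬(a1 + s * a0 = 0 ∧ b1 + s*b0 = 0 ∧ c1 + s*c0 + s = 0)) →
    ∀ a2 b2 c2 : ZMod 2, (∀ s t, ¬(a2 + s * a0 + t*a1 + t = 0 ∧ b2 + s*b0 + t*b1+s = 0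
       ∧ c2 + s*c0 + t*c1 + s*t = 0)) →
    ∃ m ∈ l33, m ≠ 1 ∧ m ≠ 0 ∧ good33 ![![a0,b0,c0],![a1,b1,c1],![a2,b2,c2]] m := by
  decide +kernel

open Matrix

lemma cross_mulVec {F : Type*} [Field F] (M : Matrix (Fin 3) (Fin 3) F) (x y : Fin 3 → F) :
    (M *ᵥ x) ⨯₃ (M *ᵥ y) = M.adjugateᵀ *ᵥ (x ⨯₃ y) := by
  rw [adjugate_fin_three]
  ext i
  fin_cases i <;> simp [cross_apply, mulVec, dotProduct, Fin.sum_univ_three] <;> ring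

lemma scalar_of_cross {F : Type*} [Field F] (M : Matrix (Fin 3) (Fin 3) F)
    (h : ∀ x, x ⨯₃ (M *ᵥ x) = 0) : ∃ c : F, M = c • (1 : Matrix (Fin 3) (Fin 3) F) := by
  have h0 := h ![1,0,0]
  have h1 := h ![0,1,0]
  have h2 := h ![0,0,1]
  have h3 := h ![1,1,0]
  have h4 := h ![1,0,1]
  simp [cross_apply, mulVec, dotProduct, Fin.sum_univ_three] at h0 h1 h2 h3 h4
  refine ⟨M 0 0, ?_⟩
  ext i j
  fin_cases i <;> fin_cases j <;> simp <;> grind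

lemma exists_isometry_aux {F : Type*} [Field F] (h2 : (2 : F) ≠ 0) (P : Matrix (Fin 3) (Fin 3) F)
    (hP : P.det ≠ 0) : ∃ M : Matrix (Fin 3) (Fin 3) F, Mᵀ * P * M = P ∧
      ∀ c : F, M ≠ c • (1 : Matrix (Fin 3) (Fin 3) F) := by
  have hu : IsUnit P.det := isUnit_iff_ne_zero.mpr hP
  by_cases hsym : Pᵀ = P
  · obtain ⟨v, hv⟩ : ∃ v : Fin 3 → F, v ⬝ᵥ (P *ᵥ v) ≠ 0 := by
      by_contra! hcon
      apply hP
      have e : ∀ i j, P i j = P j i := fun i j => by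
        conv_lhs => rw [← hsym]
        rfl
      have a0 := hcon ![1,0,0]
      have a1 := hcon ![0,1,0]
      have a2 := hcon ![0,0,1]
      have a3 := hcon ![1,1,0]
      have a4 := hcon ![1,0,1]
      have a5 := hcon ![0,1,1]
      simp [mulVec, dotProduct, Fin.sum_univ_three] at a0 a1 a2 a3 a4 a5
      have e01 : P 0 1 = 0 := by
        have : 2 * P 0 1 = 0 := by linear_combination a3 - a0 - a1 + e 0 1
        simpa [h2] using this
      have e02 : P 0 2 = 0 := by
        have : 2 * P 0 2 = 0 := by linear_combination a4 - a0 - a2 + e 0 2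
        simpa [h2] using this
      have e12 : P 1 2 = 0 := by
        have : 2 * P 1 2 = 0 := by linear_combination a5 - a1 - a2 + e 1 2
        simpa [h2] using this
      rw [det_fin_three]
      rw [a0, e01, e02]; ring
    set w := P *ᵥ v with hw
    set k := 2 / (v ⬝ᵥ w) with hk
    have hk0 : k ≠ 0 := div_ne_zero h2 hv
    have hkv : k * (v ⬝ᵥ w) = 2 := by rw [hk]; field_simp
    refine ⟨1 - k • vecMulVec v w, ?_, ?_⟩
    · have t1 : P * vecMulVec v w = vecMulVec w w := by rw [mul_vecMulVec]
      have t2 : vecMulVec w v * P = vecMulVec w w := by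
        rw [vecMulVec_mul, ← mulVec_transpose, hsym]
      have t3 : vecMulVec w w * vecMulVec v w = (v ⬝ᵥ w) • vecMulVec w w := by
        rw [vecMulVec_mul_vecMulVec, dotProduct_comm]
        ext i j; simp [vecMulVec]; ring
      have t4 : (vecMulVec v w)ᵀ = vecMulVec w v := by
        ext i j; simp [vecMulVec, mul_comm]
      rw [transpose_sub, transpose_smul, t4, transpose_one]
      simp only [sub_mul, mul_sub, one_mul, mul_one, smul_mul_assoc, mul_smul_comm, t1, t2, t3]
      have : k • (v ⬝ᵥ w) • vecMulVec w w = (2:F) • vecMulVec w w := by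
        rw [← hkv]; simp only [smul_smul]
      rw [this]
      module
    · intro c hc
      have hh : ∀ i j, (1 : Matrix (Fin 3) (Fin 3) F) i j - k * (v i * w j) = c * (1 : Matrix (Fin 3) (Fin 3) F) i j := by
        intro i j
        have := congrFun (congrFun hc i) j
        simpa [vecMulVec] using this
      have z : ∀ i j, i ≠ j → v i * w j = 0 := by
        intro i j hij
        have := hh i j
        simpa [one_apply_ne hij, hk0] using this
      have d : ∀ i, k * (v i * w i) = 1 - c := by
        intro i
        have := hh i i
        simp only [one_apply_eq] at this
        linear_combination -this
      have hd : (1 - c) * (1 - c) = 0 := by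
        calc (1-c)*(1-c) = (k * (v 0 * w 0)) * (k * (v 1 * w 1)) := by rw [d, d]
          _ = k * k * (v 0 * w 1) * (v 1 * w 0) := by ring
          _ = 0 := by rw [z 0 1 (by decide)]; ring
      have hd' : 1 - c = 0 := by simpa using hd
      apply hv
      have : k * (v ⬝ᵥ w) = 0 := by
        simp only [dotProduct, Fin.sum_univ_three, mul_add, d, hd']; ring
      simpa [hk0] using this
  · refine ⟨P⁻¹ * Pᵀ, ?_, ?_⟩
    · rw [transpose_mul, transpose_transpose, transpose_nonsing_inv]
      have hut : IsUnit Pᵀ.det := by rwa [det_transpose]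
      calc P * Pᵀ⁻¹ * P * (P⁻¹ * Pᵀ) = P * Pᵀ⁻¹ * (P * P⁻¹) * Pᵀ := by simp only [Matrix.mul_assoc]
        _ = P * (Pᵀ⁻¹ * Pᵀ) := by rw [mul_nonsing_inv _ hu]; simp only [Matrix.mul_assoc, Matrix.mul_one, Matrix.one_mul]
        _ = P := by rw [nonsing_inv_mul _ hut, Matrix.mul_one]
    · intro c hc
      have e1 : Pᵀ = c • P := by
        calc Pᵀ = P * (P⁻¹ * Pᵀ) := by rw [← Matrix.mul_assoc, mul_nonsing_inv _ hu, Matrix.one_mul]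
          _ = c • P := by rw [hc]; simp
      have e2 : c ^ 3 * P.det = P.det := by
        have := congrArg det e1
        rw [det_transpose, det_smul] at this
        simpa using this.symm
      have e3 : c ^ 3 = 1 := by
        have : (c^3 - 1) * P.det = 0 := by linear_combination e2
        rcases mul_eq_zero.mp this with h | h
        · linear_combination h
        · exact absurd h hP
      have e4 : P = (c*c) • P := by
        conv_lhs => rw [← transpose_transpose P, e1, transpose_smul, e1, smul_smul]
      have e5 : (c*c)^3 * P.det = P.det := by
        have := congrArg det e4
        rw [det_smul] at this
        simpa using this.symm
      have hP0 : P ≠ 0 := by rintro rfl; simp at hP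
      have e6 : c * c = 1 := by
        have : (c*c - 1) • P = 0 := by rw [sub_smul, ← e4]; simp
        rcases smul_eq_zero.mp this with h | h
        · linear_combination h
        · exact absurd h hP0
      have e7 : c = 1 := by linear_combination e3 - c * e6
      exact hsym (by rw [e1, e7, one_smul])

lemma exists_isometry {F : Type*} [Field F] (h2 : (2 : F) ≠ 0) (P : Matrix (Fin 3) (Fin 3) F)
    (hP : P.det ≠ 0) : ∃ M : Matrix (Fin 3) (Fin 3) F, P * M = M.adjugateᵀ * P ∧
      ∀ c : F, M ≠ c • (1 : Matrix (Fin 3) (Fin 3) F) := by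
  have key : ∀ M : Matrix (Fin 3) (Fin 3) F, Mᵀ * P * M = P → M.det = 1 →
      P * M = M.adjugateᵀ * P := by
    intro M hM hd
    conv_rhs => rw [← hM]
    rw [← Matrix.mul_assoc, ← Matrix.mul_assoc, ← transpose_mul, mul_adjugate, hd]
    simp
  obtain ⟨M, hM, hc⟩ := exists_isometry_aux h2 P hP
  have hd : M.det * M.det = 1 := by
    have := congrArg det hM
    rw [det_mul, det_mul, det_transpose] at this
    have h : (M.det * M.det - 1) * P.det = 0 := by linear_combination this
    rcases mul_eq_zero.mp h with h | h
    · linear_combination h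
    · exact absurd h hP
  rcases mul_self_eq_one_iff.mp hd with h | h
  · exact ⟨M, key M hM h, hc⟩
  · refine ⟨-M, key (-M) (by simpa using hM) ?_, ?_⟩
    · rw [det_neg, h]; simp; norm_num
    · intro c h'
      apply hc (-c)
      rw [neg_smul, ← h', neg_neg]

section LinAlg

/-- Two quadratic-type maps agree if they agree on a basis. -/
lemma iso_of_basis {p : ℕ} [Fact p.Prime] {V W ι : Type*} [AddCommGroup V] [Module (ZMod p) V]
    [AddCommGroup W] [Module (ZMod p) W] (b : V →ₗ[ZMod p] V →ₗ[ZMod p] W) (Q : V → W) (ε : ZMod p)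
    (hQ : ∀ x y, Q (x + y) = Q x + Q y + ε • b x y) (e : Basis ι (ZMod p) V)
    (A : V →ₗ[ZMod p] V) (B : W →ₗ[ZMod p] W)
    (h1 : ∀ i j, b (A (e i)) (A (e j)) = B (b (e i) (e j)))
    (h2 : ∀ i, Q (A (e i)) = B (Q (e i))) :
    (∀ x y, b (A x) (A y) = B (b x y)) ∧ ∀ x, Q (A x) = B (Q x) := by
  have hb : ∀ x y, b (A x) (A y) = B (b x y) := by
    have : b.compl₁₂ A A = b.compr₂ B := by
      apply LinearMap.ext_basis e e
      simpa using h1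
    intro x y
    simpa using congrArg (fun f => f x y) this
  refine ⟨hb, ?_⟩
  let D : V →+ W := AddMonoidHom.mk' (fun x => Q (A x) - B (Q x)) (by
    intro x y
    simp only [map_add, hQ, hb, map_smul]
    abel)
  have hD : D.toZModLinearMap p = 0 := by
    apply e.ext
    intro i
    simp [D, h2]
  intro x
  have := congrArg (fun f => f x) hD
  simpa [D, sub_eq_zero] using this

/-- The conclusion of the linear algebra part. -/
def HasBadPair {p : ℕ} {V W : Type*} [AddCommGroup V] [Module (ZMod p) V]
    [AddCommGroup W] [Module (ZMod p) W] (b : V →ₗ[ZMod p] V →ₗ[ZMod p] W) (Q : V → W) : Prop :=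
  ∃ (A : V →ₗ[ZMod p] V) (B : W →ₗ[ZMod p] W), (∀ x y, b (A x) (A y) = B (b x y)) ∧
    (∀ x, Q (A x) = B (Q x)) ∧ ∃ x, b x (A x) ≠ 0

section gen
variable {p : ℕ} [Fact p.Prime] {V W : Type*} [AddCommGroup V] [Module (ZMod p) V]
    [AddCommGroup W] [Module (ZMod p) W] (b : V →ₗ[ZMod p] V →ₗ[ZMod p] W)

lemma alt_symm (halt : ∀ x, b x x = 0) (x y : V) : b y x = - b x y := by
  have := halt (x + y)
  simp only [map_add, LinearMap.add_apply, halt] at this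
  rw [eq_neg_iff_add_eq_zero]
  simpa using this

/-- the span of a 2-dimensional (or less) alternating map -/
lemma finrank_le_one_of_le_two [FiniteDimensional (ZMod p) V] (halt : ∀ x, b x x = 0)
    (hspan : Submodule.span (ZMod p) {w | ∃ x y, b x y = w} = ⊤)
    (hV : finrank (ZMod p) V ≤ 2) : finrank (ZMod p) W ≤ 1 := by
  obtain ⟨e1, e2, he⟩ : ∃ e1 e2 : V, ∀ x, ∃ s t : ZMod p, x = s • e1 + t • e2 := by
    let e := finBasis (ZMod p) V
    have : ∃ n, n = finrank (ZMod p) V := ⟨_, rfl⟩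
    obtain ⟨n, hn⟩ := this
    have e' : Basis (Fin n) (ZMod p) V := e.reindex (finCongr hn.symm)
    rw [← hn] at hV
    interval_cases n
    · refine ⟨0, 0, fun x => ⟨0, 0, ?_⟩⟩
      rw [← e'.sum_repr x]; simp
    · refine ⟨e' 0, 0, fun x => ⟨e'.repr x 0, 0, ?_⟩⟩
      conv_lhs => rw [← e'.sum_repr x]
      simp
    · refine ⟨e' 0, e' 1, fun x => ⟨e'.repr x 0, e'.repr x 1, ?_⟩⟩
      conv_lhs => rw [← e'.sum_repr x, Fin.sum_univ_two]
  have : (⊤ : Submodule (ZMod p) W) ≤ Submodule.span (ZMod p) {b e1 e2} := by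
    rw [← hspan, Submodule.span_le]
    rintro w ⟨x, y, rfl⟩
    obtain ⟨s, t, rfl⟩ := he x
    obtain ⟨s', t', rfl⟩ := he y
    simp only [map_add, map_smul, LinearMap.add_apply, LinearMap.smul_apply, halt,
      alt_symm b halt e1 e2]
    rw [SetLike.mem_coe, Submodule.mem_span_singleton]
    exact ⟨s * t' - t * s', by module⟩
  refine finrank_le_one (b e1 e2) fun w => ?_
  exact Submodule.mem_span_singleton.mp (this (Submodule.mem_top (x := w)))

lemma coords33 [FiniteDimensional (ZMod p) V] [FiniteDimensional (ZMod p) W] (halt : ∀ x, b x x = 0)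
    (hspan : Submodule.span (ZMod p) {w | ∃ x y, b x y = w} = ⊤)
    (hV : finrank (ZMod p) V = 3) (hW : finrank (ZMod p) W = 3) :
    ∃ (eV : V ≃ₗ[ZMod p] (Fin 3 → ZMod p)) (eW : W ≃ₗ[ZMod p] (Fin 3 → ZMod p)),
      ∀ x y, eW (b x y) = eV x ⨯₃ eV y := by
  let e : Basis (Fin 3) (ZMod p) V := finBasisOfFinrankEq _ _ hV
  let w : Fin 3 → W := ![b (e 1) (e 2), b (e 2) (e 0), b (e 0) (e 1)]
  have hb : ∀ x y, b x y = ∑ i, (e.equivFun x ⨯₃ e.equivFun y) i • w i := by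
    intro x y
    conv_lhs => rw [← e.sum_equivFun x, ← e.sum_equivFun y]
    simp only [Fin.sum_univ_three, map_add, map_smul, LinearMap.add_apply, LinearMap.smul_apply,
      halt, alt_symm b halt (e 0) (e 1), alt_symm b halt (e 1) (e 2), alt_symm b halt (e 2) (e 0),
      cross_apply, w]
    simp
    module
  have hs : ⊤ ≤ Submodule.span (ZMod p) (Set.range w) := by
    rw [← hspan, Submodule.span_le]
    rintro _ ⟨x, y, rfl⟩
    rw [hb]
    exact Submodule.sum_mem _ fun i _ => Submodule.smul_mem _ _ (Submodule.subset_span ⟨i, rfl⟩)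
  let f : Basis (Fin 3) (ZMod p) W := basisOfTopLeSpanOfCardEqFinrank w hs (by simp [hW])
  have hf : ∀ i, f i = w i := fun i => by simp [f]
  refine ⟨e.equivFun, f.equivFun, fun x y => ?_⟩
  rw [hb]
  simp_rw [← hf]
  exact f.equivFun_symm_apply _ ▸ LinearEquiv.apply_symm_apply _ _

lemma bad_of_matrix {b : V →ₗ[ZMod p] V →ₗ[ZMod p] W} {Q : V → W}
    (eV : V ≃ₗ[ZMod p] (Fin 3 → ZMod p)) (eW : W ≃ₗ[ZMod p] (Fin 3 → ZMod p))
    (h : ∀ x y, eW (b x y) = eV x ⨯₃ eV y) (M : Matrix (Fin 3) (Fin 3) (ZMod p))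
    (hM : ∀ c : ZMod p, M ≠ c • (1 : Matrix (Fin 3) (Fin 3) (ZMod p)))
    (hQ : ∀ x, eW (Q (eV.symm (M *ᵥ x))) = M.adjugateᵀ *ᵥ (eW (Q (eV.symm x)))) :
    HasBadPair b Q := by
  refine ⟨eV.symm.toLinearMap ∘ₗ M.mulVecLin ∘ₗ eV.toLinearMap,
    eW.symm.toLinearMap ∘ₗ (M.adjugateᵀ).mulVecLin ∘ₗ eW.toLinearMap, ?_, ?_, ?_⟩
  · intro x y
    apply eW.injective
    simp [h, cross_mulVec, ← mulVec_transpose]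
  · intro x
    apply eW.injective
    have := hQ (eV x)
    simpa [← mulVec_transpose] using this
  · by_contra! hcon
    obtain ⟨c, hc⟩ := scalar_of_cross M (fun x => by
      have := congrArg eW (hcon (eV.symm x))
      simpa [h] using this)
    exact hM c hc

lemma finrank33_of_linear [FiniteDimensional (ZMod p) V] [FiniteDimensional (ZMod p) W]
    (halt : ∀ x, b x x = 0)
    (hspan : Submodule.span (ZMod p) {w | ∃ x y, b x y = w} = ⊤) (hne : ∃ x y, b x y ≠ 0)
    (Q : V → W) (hQ : ∀ x y, Q (x + y) = Q x + Q y) (hQ0 : ∀ x, Q x = 0 → x = 0)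
    (hcard : finrank (ZMod p) V + finrank (ZMod p) W ≤ 6) :
    finrank (ZMod p) V = 3 ∧ finrank (ZMod p) W = 3 := by
  let L : V →ₗ[ZMod p] W := (AddMonoidHom.mk' Q hQ).toZModLinearMap p
  have hL : Function.Injective L := by
    rw [injective_iff_map_eq_zero]
    exact hQ0
  have h1 := LinearMap.finrank_le_finrank_of_injective hL
  have h3 : ¬ finrank (ZMod p) V ≤ 1 := by
    intro h
    obtain ⟨v, hv⟩ := finrank_le_one_iff.mp h
    obtain ⟨x, y, hxy⟩ := hne
    obtain ⟨s, rfl⟩ := hv x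
    obtain ⟨t, rfl⟩ := hv y
    apply hxy
    simp [halt]
  have h2 : ¬ finrank (ZMod p) V ≤ 2 := by
    intro h
    have := finrank_le_one_of_le_two b halt hspan h
    omega
  omega

lemma bad_of_linear (hp2 : p ≠ 2) [FiniteDimensional (ZMod p) V] [FiniteDimensional (ZMod p) W]
    (halt : ∀ x, b x x = 0)
    (hspan : Submodule.span (ZMod p) {w | ∃ x y, b x y = w} = ⊤) (hne : ∃ x y, b x y ≠ 0)
    (Q : V → W) (hQ : ∀ x y, Q (x + y) = Q x + Q y) (hQ0 : ∀ x, Q x = 0 → x = 0)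
    (hcard : finrank (ZMod p) V + finrank (ZMod p) W ≤ 6) : HasBadPair b Q := by
  obtain ⟨hV, hW⟩ := finrank33_of_linear b halt hspan hne Q hQ hQ0 hcard
  obtain ⟨eV, eW, he⟩ := coords33 b halt hspan hV hW
  let L : V →ₗ[ZMod p] W := (AddMonoidHom.mk' Q hQ).toZModLinearMap p
  have hL : Function.Injective L := by
    rw [injective_iff_map_eq_zero]
    exact hQ0
  let L' : (Fin 3 → ZMod p) →ₗ[ZMod p] (Fin 3 → ZMod p) :=
    eW.toLinearMap ∘ₗ L ∘ₗ eV.symm.toLinearMap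
  let P := LinearMap.toMatrix' L'
  have hPv : ∀ x, P *ᵥ x = eW (Q (eV.symm x)) := by
    intro x
    rw [LinearMap.toMatrix'_mulVec]
    rfl
  have hP : P.det ≠ 0 := by
    intro h
    obtain ⟨v, hv, hv0⟩ := Matrix.exists_mulVec_eq_zero_iff.mpr h
    rw [hPv] at hv0
    apply hv
    have := hQ0 _ (eW.map_eq_zero_iff.mp hv0)
    exact eV.symm.map_eq_zero_iff.mp this
  have h2 : (2 : ZMod p) ≠ 0 := by
    intro h
    have : ((2 : ℕ) : ZMod p) = 0 := by exact_mod_cast h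
    rw [ZMod.natCast_eq_zero_iff] at this
    exact hp2 ((Nat.prime_dvd_prime_iff_eq Fact.out Nat.prime_two).mp this)
  obtain ⟨M, hM, hc⟩ := exists_isometry h2 P hP
  refine bad_of_matrix eV eW he M hc fun x => ?_
  rw [← hPv, ← hPv, mulVec_mulVec, hM, ← mulVec_mulVec]

end gen
end LinAlg

section LinAlgTwo

lemma zmod2_cases (s : ZMod 2) : s = 0 ∨ s = 1 := by
  revert s; decide

lemma exists_rank_two {p : ℕ} [Fact p.Prime] {V W : Type*} [AddCommGroup V] [Module (ZMod p) V]
    [AddCommGroup W] [Module (ZMod p) W] [FiniteDimensional (ZMod p) W]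
    (b : V →ₗ[ZMod p] V →ₗ[ZMod p] W)
    (halt : ∀ x, b x x = 0)
    (hspan : Submodule.span (ZMod p) {w | ∃ x y, b x y = w} = ⊤) (hne : ∃ x y, b x y ≠ 0)
    (hW : finrank (ZMod p) W = 2) :
    ∃ e y1 y2, LinearIndependent (ZMod p) ![b e y1, b e y2] ∧ b y1 y2 = 0 := by
  have key : ∃ e y1 y2, LinearIndependent (ZMod p) ![b e y1, b e y2] := by
    by_contra! hcon
    have dep : ∀ e y, b e y ≠ 0 → ∀ t, ∃ a : ZMod p, a • b e y = b e t := by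
      intro e y h t
      have := hcon e y t
      rw [LinearIndependent.pair_iff' h] at this
      push Not at this
      exact this
    obtain ⟨x, y, hu⟩ := hne
    obtain ⟨x', y', hv⟩ : ∃ x' y', ∀ a : ZMod p, a • b x y ≠ b x' y' := by
      by_contra! h
      have : (⊤ : Submodule (ZMod p) W) ≤ Submodule.span (ZMod p) {b x y} := by
        rw [← hspan, Submodule.span_le]
        rintro w ⟨x', y', rfl⟩
        exact Submodule.mem_span_singleton.mpr (h x' y')
      have h1 := finrank_le_one (b x y) fun w =>
        Submodule.mem_span_singleton.mp (this (Submodule.mem_top (x := w)))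
      omega
    have hv0 : b x' y' ≠ 0 := by
      intro h
      exact hv 0 (by rw [h, zero_smul])
    have hu' : b y x ≠ 0 := by rw [alt_symm b halt x y]; simpa using hu
    have hv' : b y' x' ≠ 0 := by rw [alt_symm b halt x' y']; simpa using hv0
    have zero : ∀ s : W, (∃ a : ZMod p, a • b x y = s) → (∃ c : ZMod p, c • b x' y' = s) → s = 0 := by
      rintro s ⟨a, rfl⟩ ⟨c, hc⟩
      by_cases h0 : c = 0
      · rw [← hc, h0, zero_smul]
      · exfalso
        apply hv (c⁻¹ * a)
        rw [← smul_smul, ← hc, smul_smul, inv_mul_cancel₀ h0, one_smul]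
    have z1 : b y x' = 0 := by
      apply zero
      · obtain ⟨a, ha⟩ := dep y x hu' x'
        exact ⟨-a, by rw [← ha, alt_symm b halt x y]; module⟩
      · obtain ⟨a, ha⟩ := dep x' y' hv0 y
        exact ⟨-a, by rw [alt_symm b halt x' y, ← ha]; module⟩
    have z2 : b x y' = 0 := by
      apply zero
      · exact dep x y hu y'
      · obtain ⟨a, ha⟩ := dep y' x' hv' x
        exact ⟨a, by rw [alt_symm b halt y' x, ← ha, alt_symm b halt x' y']; module⟩
    apply hcon (x + x') y y'
    have e1 : b (x + x') y = b x y := by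
      rw [map_add, LinearMap.add_apply, alt_symm b halt y x', z1]; simp
    have e2 : b (x + x') y' = b x' y' := by
      rw [map_add, LinearMap.add_apply, z2]; simp
    rw [e1, e2, LinearIndependent.pair_iff' hu]
    exact hv
  obtain ⟨e, y1, y2, hli⟩ := key
  have hs := hli.span_eq_top_of_card_eq_finrank' (by simp [hW])
  have : b y1 y2 ∈ Submodule.span (ZMod p) (Set.range ![b e y1, b e y2]) := by rw [hs]; trivial
  simp only [Matrix.range_cons, Matrix.range_empty, Set.union_empty, Set.singleton_union] at this
  obtain ⟨l, m, hlm⟩ := Submodule.mem_span_pair.mp this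
  refine ⟨e, y1 - m • e, y2 + l • e, ?_, ?_⟩
  · simpa [halt] using hli
  · simp only [map_add, map_sub, map_smul, LinearMap.sub_apply, LinearMap.smul_apply, halt,
      ← hlm, alt_symm b halt e y1]
    module

variable {V W : Type*} [AddCommGroup V] [Module (ZMod 2) V]
    [AddCommGroup W] [Module (ZMod 2) W] (b : V →ₗ[ZMod 2] V →ₗ[ZMod 2] W)

lemma add_self_two (x : V) : x + x = 0 := by
  have : (2 : ZMod 2) • x = 0 := by
    rw [show (2 : ZMod 2) = 0 from rfl, zero_smul]
  rwa [two_smul] at this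

lemma symm_two (halt : ∀ x, b x x = 0) (x y : V) : b y x = b x y := by
  rw [alt_symm b halt x y, neg_eq_iff_add_eq_zero, add_self_two]

variable (Q : V → W)

lemma Q_zero (hQ : ∀ x y, Q (x + y) = Q x + Q y + b x y) : Q 0 = 0 := by
  have := hQ 0 0
  simpa using this

lemma Q_smul (hQ : ∀ x y, Q (x + y) = Q x + Q y + b x y) (s : ZMod 2) (x : V) :
    Q (s • x) = s • Q x := by
  rcases zmod2_cases s with rfl | rfl
  · simp [Q_zero b Q hQ]
  · simp

lemma bad_of_normal (halt : ∀ x, b x x = 0) (hQ : ∀ x y, Q (x + y) = Q x + Q y + b x y)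
    {ι : Type*} (e : Basis ι (ZMod 2) V) (n : V)
    (h : ∀ i, b n (e i) = 0 ∨ b n (e i) = Q n) (h0 : ∃ i, b n (e i) ≠ 0) : HasBadPair b Q := by
  classical
  let f : V →ₗ[ZMod 2] ZMod 2 := e.constr (ZMod 2) (fun i => if b n (e i) = 0 then (0 : ZMod 2) else 1)
  have hf : ∀ y, b n y = f y • Q n := by
    have : b n = f.smulRight (Q n) := by
      apply e.ext
      intro i
      simp only [f, LinearMap.smulRight_apply, Basis.constr_basis]
      split_ifs with hi
      · simpa using hi
      · rcases h i with h' | h'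
        · exact absurd h' hi
        · simpa using h'
    intro y
    rw [this]; rfl
  have hf' : ∀ y, b y n = f y • Q n := fun y => by rw [symm_two b halt n y, hf]
  refine ⟨LinearMap.id + f.smulRight n, LinearMap.id, ?_, ?_, ?_⟩
  · intro x y
    simp only [LinearMap.add_apply, LinearMap.id_apply, LinearMap.smulRight_apply, map_add,
      map_smul, LinearMap.smul_apply, hf, hf']
    have fnn : f n • Q n = 0 := by rw [← hf, halt]
    rw [fnn, smul_zero, add_zero]
    have := add_self_two (f x • f y • Q n)
    rw [smul_comm (f y) (f x), add_assoc, this, add_zero]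
  · intro x
    simp only [LinearMap.add_apply, LinearMap.id_apply, LinearMap.smulRight_apply, hQ,
      Q_smul b Q hQ, map_smul, hf']
    rcases zmod2_cases (f x) with hx | hx <;> rw [hx]
    · simp
    · simp only [one_smul]; rw [add_assoc, add_self_two, add_zero]
  · obtain ⟨i, hi⟩ := h0
    refine ⟨e i, ?_⟩
    simp only [LinearMap.add_apply, LinearMap.id_apply, LinearMap.smulRight_apply, map_add, halt,
      map_smul, symm_two b halt n (e i), zero_add]
    have : f (e i) = 1 := by simp [f, hi]
    rw [this, one_smul]; exact hi

lemma bad_of_transvection (halt : ∀ x, b x x = 0) (hQ : ∀ x y, Q (x + y) = Q x + Q y + b x y)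
    (hQ0 : ∀ x, Q x = 0 → x = 0) (e : Basis (Fin 4) (ZMod 2) V) (z1 z2 : V)
    (h1 : b (e 0) z1 = 0) (h2 : b (e 1) z1 = 0) (h3 : b (e 0) z2 = 0) (h4 : b (e 1) z2 = 0)
    (h5 : b z1 z2 = 0) (h6 : b (e 2) z2 = b (e 3) z1) (h7 : Q z1 = b (e 2) z1)
    (h8 : Q z2 = b (e 3) z2) (h9 : z1 ≠ 0) : HasBadPair b Q := by
  let A : V →ₗ[ZMod 2] V := e.constr (ZMod 2) ![e 0, e 1, e 2 + z1, e 3 + z2]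
  have A0 : A (e 0) = e 0 := by simp [A]
  have A1 : A (e 1) = e 1 := by simp [A]
  have A2 : A (e 2) = e 2 + z1 := by simp [A]
  have A3 : A (e 3) = e 3 + z2 := by simp [A]
  have h1' := symm_two b halt (e 0) z1
  have h2' := symm_two b halt (e 1) z1
  have h3' := symm_two b halt (e 0) z2
  have h4' := symm_two b halt (e 1) z2
  have h5' := symm_two b halt z1 z2
  have h6' := symm_two b halt (e 2) z2
  have h10 := symm_two b halt (e 3) z1
  have h11 := symm_two b halt (e 2) z1
  have h12 := symm_two b halt (e 3) z2
  rw [h1] at h1'; rw [h2] at h2'; rw [h3] at h3'; rw [h4] at h4'; rw [h5] at h5'; rw [h6] at h6'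
  have key := iso_of_basis b Q 1 (by simpa using hQ) e A LinearMap.id (by
    intro i j
    fin_cases i <;> fin_cases j <;>
      simp [A0, A1, A2, A3, h1, h2, h3, h4, h5, h1', h2', h3', h4', h5', h6, h6', h10, h11, h12,
        halt, add_self_two, add_assoc]) (by
    intro i
    fin_cases i <;> simp [A0, A1, A2, A3, hQ, h7, h8, add_assoc, add_self_two])
  refine ⟨A, LinearMap.id, key.1, key.2, e 2, ?_⟩
  rw [A2, map_add, halt, zero_add, ← h7]
  exact fun h => h9 (hQ0 _ h)

lemma bad_dim_one (halt : ∀ x, b x x = 0) (hQ : ∀ x y, Q (x + y) = Q x + Q y + b x y)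
    (hQ0 : ∀ x, Q x = 0 → x = 0) [FiniteDimensional (ZMod 2) V] (hne : ∃ x y, b x y ≠ 0)
    (hW : finrank (ZMod 2) W = 1) : HasBadPair b Q := by
  obtain ⟨x, y, hxy⟩ := hne
  have hx : Q x ≠ 0 := by
    intro h
    rw [hQ0 x h] at hxy
    simp at hxy
  refine bad_of_normal b Q halt hQ (finBasis (ZMod 2) V) x ?_ ?_
  · intro i
    obtain ⟨c, hc⟩ := exists_smul_eq_of_finrank_eq_one hW hx (b x (finBasis (ZMod 2) V i))
    rcases zmod2_cases c with rfl | rfl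
    · left; simpa using hc.symm
    · right; simpa using hc.symm
  · by_contra! h
    apply hxy
    have : b x = 0 := (finBasis (ZMod 2) V).ext (by simpa using h)
    rw [this]; rfl

lemma bad_dim_two (halt : ∀ x, b x x = 0) (hQ : ∀ x y, Q (x + y) = Q x + Q y + b x y)
    (hQ0 : ∀ x, Q x = 0 → x = 0) [FiniteDimensional (ZMod 2) V] [FiniteDimensional (ZMod 2) W]
    (hspan : Submodule.span (ZMod 2) {w | ∃ x y, b x y = w} = ⊤)
    (hne : ∃ x y, b x y ≠ 0)
    (hW : finrank (ZMod 2) W = 2) (hV : finrank (ZMod 2) V ≤ 4) : HasBadPair b Q := by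
  obtain ⟨e, y1, y2, hli, h12⟩ := exists_rank_two b halt hspan hne hW
  have hs := hli.span_eq_top_of_card_eq_finrank' (by simp [hW])
  have hgen : ∀ w, ∃ l m : ZMod 2, w = l • b e y1 + m • b e y2 := by
    intro w
    have : w ∈ Submodule.span (ZMod 2) (Set.range ![b e y1, b e y2]) := by rw [hs]; trivial
    simp only [Matrix.range_cons, Matrix.range_empty, Set.union_empty, Set.singleton_union] at this
    obtain ⟨l, m, hlm⟩ := Submodule.mem_span_pair.mp this
    exact ⟨l, m, hlm.symm⟩
  rw [LinearIndependent.pair_iff] at hli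
  set u := b e y1 with hu
  set v := b e y2 with hv
  have hiff : ∀ s t : ZMod 2, s • u + t • v = 0 ↔ s = 0 ∧ t = 0 := by
    intro s t
    refine ⟨hli s t, ?_⟩
    rintro ⟨rfl, rfl⟩; simp
  have hiff2 : ∀ s t s' t' : ZMod 2, s • u + t • v = s' • u + t' • v ↔ s = s' ∧ t = t' := by
    intro s t s' t'
    rw [← sub_eq_zero, show s • u + t • v - (s' • u + t' • v) = (s - s') • u + (t - t') • v by module,
      hiff, sub_eq_zero, sub_eq_zero]
  have he0 : e ≠ 0 := by
    rintro rfl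
    have := hli 1 0 (by simp [hu])
    simp at this
  have bye : b y1 e = u := symm_two b halt e y1
  have bye2 : b y2 e = v := symm_two b halt e y2
  have h21 : b y2 y1 = 0 := by rw [symm_two b halt y1 y2, h12]
  have hind : ∀ s r k : ZMod 2, s • e + r • y1 + k • y2 = 0 → s = 0 ∧ r = 0 ∧ k = 0 := by
    intro s r k h
    have h' := congrArg (b e) h
    simp only [map_add, map_smul, halt, map_zero, smul_zero, zero_add] at h'
    obtain ⟨rfl, rfl⟩ := hli r k h'
    simpa [he0] using h
  have h3 : LinearIndependent (ZMod 2) ![e, y1, y2] := by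
    rw [Fintype.linearIndependent_iff]
    intro g hg
    have := hind (g 0) (g 1) (g 2) (by simpa [Fin.sum_univ_three] using hg)
    intro i; fin_cases i
    · exact this.1
    · exact this.2.1
    · exact this.2.2
  have hc := h3.fintype_card_le_finrank
  simp only [Fintype.card_fin] at hc
  obtain ⟨a0, b0, q0⟩ := hgen (Q e)
  obtain ⟨a2, b2, q2⟩ := hgen (Q y1)
  obtain ⟨a3, b3, q3⟩ := hgen (Q y2)
  rcases (show finrank (ZMod 2) V = 3 ∨ finrank (ZMod 2) V = 4 by omega) with hn | hn
  · let E := basisOfLinearIndependentOfCardEqFinrank h3 (by simp [hn])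
    have E0 : E 0 = e := by simp [E]
    have E1 : E 1 = y1 := by simp [E]
    have E2 : E 2 = y2 := by simp [E]
    have hQx : ∀ s r k : ZMod 2, Q (s • e + r • y1 + k • y2) =
        (s*a0+r*a2+k*a3+r*s) • u + (s*b0+r*b2+k*b3+k*s) • v := by
      intro s r k
      simp only [hQ, Q_smul b Q hQ, map_add, map_smul, LinearMap.add_apply, LinearMap.smul_apply,
        h12, ← hu, ← hv, q0, q2, q3]
      module
    have hnz : ∀ s r k : ZMod 2, (s*a0+r*a2+k*a3+r*s) = 0 ∧ (s*b0+r*b2+k*b3+k*s) = 0 →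
        s = 0 ∧ r = 0 ∧ k = 0 := by
      intro s r k h
      apply hind
      apply hQ0
      rw [hQx, h.1, h.2]; simp
    obtain ⟨s, r, k, h⟩ := finite_check32 a0 b0 (by
        intro h
        have := hnz 1 0 0 (by simpa using h)
        simp at this) a2 b2 (by
        intro s h
        have := hnz s 1 0 (by simpa using h)
        simp at this) a3 b3 (by
        intro s r h
        have := hnz s r 1 (by simpa using h)
        simp at this)
    obtain ⟨p1, p2, p3, p4⟩ := h
    have c0 : b (s • e + r • y1 + k • y2) e = r • u + k • v := by
      simp [halt, bye, bye2]
    have c1 : b (s • e + r • y1 + k • y2) y1 = s • u + (0 : ZMod 2) • v := by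
      simp [halt, h21, hu]
    have c2 : b (s • e + r • y1 + k • y2) y2 = (0 : ZMod 2) • u + s • v := by
      simp [halt, h12, hv]
    refine bad_of_normal b Q halt hQ E (s • e + r • y1 + k • y2) ?_ ?_
    · intro i
      fin_cases i
      · simp only [Fin.zero_eta, E0, c0, hQx, hiff, hiff2]; exact p1
      · simp only [Fin.mk_one, E1, c1, hQx, hiff2, hiff s 0]; simpa using p2
      · simp only [Fin.reduceFinMk, E2, c2, hQx, hiff2, hiff 0 s]; simpa using p3
    · by_contra! h
      have k0 := h 0
      have k1 := h 1
      rw [E0, c0, hiff] at k0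
      rw [E1, c1, hiff] at k1
      exact p4 ⟨k0.1, k0.2, k1.1⟩
  · obtain ⟨e2, he2, hnot⟩ : ∃ e2, b e e2 = 0 ∧ e2 ∉ Submodule.span (ZMod 2) {e} := by
      by_contra! hcon
      have h1 := LinearMap.finrank_range_add_finrank_ker (b e)
      have h2 : finrank (ZMod 2) (LinearMap.range (b e)) ≤ 2 := by
        have := Submodule.finrank_le (LinearMap.range (b e))
        rwa [hW] at this
      have h4 : LinearMap.ker (b e) ≤ Submodule.span (ZMod 2) {e} := fun x hx => hcon x hx
      have h5 := Submodule.finrank_mono h4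
      rw [finrank_span_singleton he0] at h5
      omega
    have b2e : b e2 e = 0 := by rw [symm_two b halt e e2, he2]
    have hind4 : ∀ s t r k : ZMod 2, s • e + t • e2 + r • y1 + k • y2 = 0 →
        s = 0 ∧ t = 0 ∧ r = 0 ∧ k = 0 := by
      intro s t r k h
      have h' := congrArg (b e) h
      simp only [map_add, map_smul, halt, map_zero, smul_zero, zero_add, he2] at h'
      obtain ⟨rfl, rfl⟩ := hli r k h'
      rcases zmod2_cases t with rfl | rfl
      · simpa [he0] using h
      · exfalso
        apply hnot
        rw [Submodule.mem_span_singleton]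
        refine ⟨-s, ?_⟩
        simp only [zero_smul, add_zero, one_smul] at h
        rw [neg_smul, neg_eq_iff_add_eq_zero, h]
    have h4 : LinearIndependent (ZMod 2) ![e, e2, y1, y2] := by
      rw [Fintype.linearIndependent_iff]
      intro g hg
      have := hind4 (g 0) (g 1) (g 2) (g 3) (by simpa [Fin.sum_univ_four] using hg)
      intro i; fin_cases i
      · exact this.1
      · exact this.2.1
      · exact this.2.2.1
      · exact this.2.2.2
    let E := basisOfLinearIndependentOfCardEqFinrank h4 (by simp [hn])
    have E0 : E 0 = e := by simp [E]
    have E1 : E 1 = e2 := by simp [E]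
    have E2 : E 2 = y1 := by simp [E]
    have E3 : E 3 = y2 := by simp [E]
    obtain ⟨a1, b1, q1⟩ := hgen (Q e2)
    obtain ⟨c, d, r1⟩ := hgen (b e2 y1)
    obtain ⟨f, g, r2⟩ := hgen (b e2 y2)
    have r1' : b y1 e2 = c • u + d • v := by rw [symm_two b halt e2 y1, r1]
    have r2' : b y2 e2 = f • u + g • v := by rw [symm_two b halt e2 y2, r2]
    have hQx : ∀ s t r k : ZMod 2, Q (s • e + t • e2 + r • y1 + k • y2) =
        (s*a0+t*a1+r*a2+k*a3+r*(s+t*c)+k*(t*f)) • u +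
        (s*b0+t*b1+r*b2+k*b3+r*(t*d)+k*(s+t*g)) • v := by
      intro s t r k
      simp only [hQ, Q_smul b Q hQ, map_add, map_smul, LinearMap.add_apply, LinearMap.smul_apply,
        h12, he2, ← hu, ← hv, q0, q2, q3, q1, r1, r2]
      module
    have hnz : ∀ s t r k : ZMod 2, (s*a0+t*a1+r*a2+k*a3+r*(s+t*c)+k*(t*f)) = 0 ∧
        (s*b0+t*b1+r*b2+k*b3+r*(t*d)+k*(s+t*g)) = 0 →
        s = 0 ∧ t = 0 ∧ r = 0 ∧ k = 0 := by
      intro s t r k h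
      apply hind4
      apply hQ0
      rw [hQx, h.1, h.2]; simp
    have fc := finite_check42 a0 b0 (by
        intro h
        have := hnz 1 0 0 0 (by simpa using h)
        simp at this) a1 b1 (by
        intro h
        have := hnz 0 1 0 0 (by simpa using h)
        simp at this) (by
        intro h
        have := hnz 1 1 0 0 (by simpa using h)
        simp at this) a2 b2 c d (by
        intro s t h
        have := hnz s t 1 0 (by
          constructor
          · linear_combination h.1
          · linear_combination h.2)
        simp at this) a3 b3 f g (by
        intro s t r h
        have := hnz s t r 1 (by
          constructor
          · linear_combination h.1
          · linear_combination h.2)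
        simp at this)
    rcases fc with ⟨s, t, r, k, p1, p2, p3, p4, p5⟩ | ⟨s, t, s', t', g1, g2, g3, g4, g5, g6, g7⟩
    · have c0 : b (s • e + t • e2 + r • y1 + k • y2) e = r • u + k • v := by
        simp [halt, bye, bye2, b2e]
      have c1 : b (s • e + t • e2 + r • y1 + k • y2) e2 = (r*c+k*f) • u + (r*d+k*g) • v := by
        simp only [map_add, map_smul, LinearMap.add_apply, LinearMap.smul_apply, halt, he2, r1', r2']
        module
      have c2 : b (s • e + t • e2 + r • y1 + k • y2) y1 = (s+t*c) • u + (t*d) • v := by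
        simp only [map_add, map_smul, LinearMap.add_apply, LinearMap.smul_apply, halt, h21, r1, ← hu]
        module
      have c3 : b (s • e + t • e2 + r • y1 + k • y2) y2 = (t*f) • u + (s+t*g) • v := by
        simp only [map_add, map_smul, LinearMap.add_apply, LinearMap.smul_apply, halt, h12, r2, ← hv]
        module
      refine bad_of_normal b Q halt hQ E (s • e + t • e2 + r • y1 + k • y2) ?_ ?_
      · intro i
        fin_cases i
        · simp only [Fin.zero_eta, E0, c0, hQx, hiff, hiff2]; exact p1
        · simp only [Fin.mk_one, E1, c1, hQx, hiff, hiff2]; exact p2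
        · simp only [Fin.reduceFinMk, E2, c2, hQx, hiff, hiff2]; exact p3
        · simp only [Fin.reduceFinMk, E3, c3, hQx, hiff, hiff2]; exact p4
      · by_contra! h
        have k0 := h 0
        have k1 := h 1
        have k2 := h 2
        have k3 := h 3
        rw [E0, c0, hiff] at k0
        rw [E1, c1, hiff] at k1
        rw [E2, c2, hiff] at k2
        rw [E3, c3, hiff] at k3
        exact p5 ⟨k0.1, k0.2, k1.1, k1.2, k2.1, k2.2, k3.1, k3.2⟩
    · have hQ2 : ∀ s t : ZMod 2, Q (s • e + t • e2) = (s*a0+t*a1) • u + (s*b0+t*b1) • v := by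
        intro s t
        have := hQx s t 0 0
        simpa using this
      have hb1 : ∀ s t : ZMod 2, b y1 (s • e + t • e2) = (s+t*c) • u + (t*d) • v := by
        intro s t
        simp only [map_add, map_smul, bye, r1']
        module
      have hb2 : ∀ s t : ZMod 2, b y2 (s • e + t • e2) = (t*f) • u + (s+t*g) • v := by
        intro s t
        simp only [map_add, map_smul, bye2, r2']
        module
      refine bad_of_transvection b Q halt hQ hQ0 E (s • e + t • e2) (s' • e + t' • e2) ?_ ?_ ?_ ?_
        ?_ ?_ ?_ ?_ ?_
      · simp [E0, halt, he2]
      · simp [E1, halt, b2e]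
      · simp [E0, halt, he2]
      · simp [E1, halt, b2e]
      · simp [halt, he2, b2e]
      · rw [E2, E3, hb1, hb2, g5, g6]
      · rw [E2, hQ2, hb1, g1, g2]
      · rw [E3, hQ2, hb2, g3, g4]
      · intro h
        have := hind4 s t 0 0 (by simpa using h)
        exact g7 ⟨this.1, this.2.1⟩

lemma bad_dim_three (halt : ∀ x, b x x = 0) (hQ : ∀ x y, Q (x + y) = Q x + Q y + b x y)
    (hQ0 : ∀ x, Q x = 0 → x = 0) [FiniteDimensional (ZMod 2) V] [FiniteDimensional (ZMod 2) W]
    (hspan : Submodule.span (ZMod 2) {w | ∃ x y, b x y = w} = ⊤)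
    (hV : finrank (ZMod 2) V = 3) (hW : finrank (ZMod 2) W = 3) : HasBadPair b Q := by
  obtain ⟨eV, eW, hbb⟩ := coords33 b halt hspan hV hW
  let R : (Fin 3 → ZMod 2) → (Fin 3 → ZMod 2) := fun x => eW (Q (eV.symm x))
  have hR : ∀ x y, R (x + y) = R x + R y + (1 : ZMod 2) • crossProduct x y := by
    intro x y
    simp [R, hQ, hbb]
  have hR0 : ∀ x, R x = 0 → x = 0 := by
    intro x hx
    have := hQ0 (eV.symm x) (by simpa [R] using hx)
    simpa using this
  have hRs : ∀ (s : ZMod 2) x, R (s • x) = s • R x := by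
    intro s x
    simp [R, Q_smul b Q hQ]
  obtain ⟨q, hq⟩ : ∃ q : Fin 3 → Fin 3 → ZMod 2, ∀ i, q i = R (Pi.single i 1) := ⟨_, fun i => rfl⟩
  have hRx : ∀ x0 x1 x2 : ZMod 2, R ![x0, x1, x2] =
      x0 • q 0 + x1 • q 1 + x2 • q 2 + ![x1 * x2, x0 * x2, x0 * x1] := by
    intro x0 x1 x2
    have h1 : ![x0, x1, x2] = x0 • Pi.single (M := fun _ => ZMod 2) (0 : Fin 3) (1 : ZMod 2)
        + x1 • Pi.single (1 : Fin 3) (1 : ZMod 2) + x2 • Pi.single (2 : Fin 3) (1 : ZMod 2) := by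
      ext i; fin_cases i <;> simp
    rw [h1, hR, hR, hRs, hRs, hRs, hq, hq, hq]
    simp only [cross_apply]
    ext i
    fin_cases i <;> simp [vecHead, vecTail]
    ring
  have hnz : ∀ x0 x1 x2 : ZMod 2, x0 * q 0 0 + x1 * q 1 0 + x2 * q 2 0 + x1 * x2 = 0 →
      x0 * q 0 1 + x1 * q 1 1 + x2 * q 2 1 + x0 * x2 = 0 →
      x0 * q 0 2 + x1 * q 1 2 + x2 * q 2 2 + x0 * x1 = 0 → x0 = 0 ∧ x1 = 0 ∧ x2 = 0 := by
    intro x0 x1 x2 h0 h1 h2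
    have h := hR0 ![x0, x1, x2] (by
      rw [hRx]
      ext i
      fin_cases i
      · simpa using h0
      · simpa using h1
      · simpa using h2)
    exact ⟨congrFun h 0, congrFun h 1, congrFun h 2⟩
  obtain ⟨m, -, hm1, hm0, hm⟩ := finite_check33 (q 0 0) (q 0 1) (q 0 2) (by
      rintro ⟨h0, h1, h2⟩
      have := hnz 1 0 0 (by simpa using h0) (by simpa using h1) (by simpa using h2)
      simp at this) (q 1 0) (q 1 1) (q 1 2) (by
      rintro s ⟨h0, h1, h2⟩
      have := hnz s 1 0 (by linear_combination h0) (by linear_combination h1)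
        (by linear_combination h2)
      simp at this) (q 2 0) (q 2 1) (q 2 2) (by
      rintro s t ⟨h0, h1, h2⟩
      have := hnz s t 1 (by linear_combination h0) (by linear_combination h1)
        (by linear_combination h2)
      simp at this)
  have hqv : ![![q 0 0, q 0 1, q 0 2], ![q 1 0, q 1 1, q 1 2], ![q 2 0, q 2 1, q 2 2]] = q := by
    ext i j; fin_cases i <;> fin_cases j <;> rfl
  rw [hqv] at hm
  refine bad_of_matrix eV eW hbb mᵀ ?_ ?_
  · intro c hc
    have h := congrArg Matrix.transpose hc
    rw [transpose_transpose, transpose_smul, transpose_one] at h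
    rcases zmod2_cases c with rfl | rfl
    · exact hm0 (by simpa using h)
    · exact hm1 (by simpa using h)
  · have key := iso_of_basis (crossProduct (R := ZMod 2)) R 1 hR (Pi.basisFun (ZMod 2) (Fin 3))
      (mᵀ).mulVecLin ((mᵀ).adjugateᵀ).mulVecLin (by
        intro i j
        simp only [mulVecLin_apply]
        exact cross_mulVec _ _ _) (by
        intro i
        simp only [mulVecLin_apply, Pi.basisFun_apply, ← hq]
        have e1 : mᵀ *ᵥ Pi.single i 1 = ![m i 0, m i 1, m i 2] := by
          ext j; fin_cases j <;> simp
        rw [e1, hRx, hm i]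
        have e2 : q i = q i 0 • ((Pi.single 1 1 : Fin 3 → ZMod 2) ⨯₃ Pi.single 2 1) +
            q i 1 • ((Pi.single 2 1 : Fin 3 → ZMod 2) ⨯₃ Pi.single 0 1) +
            q i 2 • ((Pi.single 0 1 : Fin 3 → ZMod 2) ⨯₃ Pi.single 1 1) := by
          ext j; fin_cases j <;> simp [cross_apply]
        conv_rhs => rw [e2]
        simp only [mulVec_add, mulVec_smul, ← cross_mulVec]
        have e3 : ∀ k, mᵀ *ᵥ Pi.single k 1 = m k := by
          intro k
          ext j; simp
        simp only [e3])
    exact key.2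

lemma bad_two (halt : ∀ x, b x x = 0) (hQ : ∀ x y, Q (x + y) = Q x + Q y + b x y)
    (hQ0 : ∀ x, Q x = 0 → x = 0) [FiniteDimensional (ZMod 2) V] [FiniteDimensional (ZMod 2) W]
    (hspan : Submodule.span (ZMod 2) {w | ∃ x y, b x y = w} = ⊤)
    (hne : ∃ x y, b x y ≠ 0)
    (hcard : finrank (ZMod 2) V + finrank (ZMod 2) W ≤ 6) : HasBadPair b Q := by
  have h0 : finrank (ZMod 2) W ≠ 0 := by
    intro h
    obtain ⟨x, y, hxy⟩ := hne
    have := finrank_zero_iff.mp h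
    exact hxy (Subsingleton.elim _ _)
  have h2 : finrank (ZMod 2) V ≤ 2 → finrank (ZMod 2) W ≤ 1 :=
    finrank_le_one_of_le_two b halt hspan
  rcases (show finrank (ZMod 2) W = 1 ∨ finrank (ZMod 2) W = 2 ∨
      (finrank (ZMod 2) V = 3 ∧ finrank (ZMod 2) W = 3) by omega) with h | h | ⟨h, h'⟩
  · exact bad_dim_one b Q halt hQ hQ0 hne h
  · exact bad_dim_two b Q halt hQ hQ0 hspan hne h (by omega)
  · exact bad_dim_three b Q halt hQ hQ0 hspan h h'

end LinAlgTwo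

end LinearPart

section GroupTheoryPart

open Module
open scoped commutatorElement

section GroupPart

lemma card_lt_step {p : ℕ} (hp : p.Prime) {G : Type*} [Group G] [Finite G] (hG : IsPGroup p G)
    {H K : Subgroup G} (h : H < K) : Nat.card H * p ≤ Nat.card K := by
  have := Fact.mk hp
  obtain ⟨n, hn⟩ := IsPGroup.iff_card.mp (hG.to_subgroup H)
  obtain ⟨m, hm⟩ := IsPGroup.iff_card.mp (hG.to_subgroup K)
  have hlt : Nat.card H < Nat.card K := by
    have := Set.ncard_lt_ncard (SetLike.coe_ssubset_coe.mpr h) (Set.toFinite _)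
    rwa [← Nat.card_coe_set_eq, ← Nat.card_coe_set_eq] at this
  rw [hn, hm] at hlt ⊢
  rw [← pow_succ]
  exact Nat.pow_le_pow_right hp.pos ((Nat.pow_lt_pow_iff_right hp.one_lt).mp hlt)

def Engel2 (G : Type*) [Group G] : Prop := ∀ x y : G, Commute ⁅x, y⁆ x

lemma Engel2.right {G : Type*} [Group G] (h : Engel2 G) (x y : G) : Commute ⁅x, y⁆ y := by
  have := (h y x).inv_left
  rwa [commutatorElement_inv] at this

lemma Engel2.swap {G : Type*} [Group G] (h : Engel2 G) (a b c : G) (hw : Commute ⁅a, c⁆ b) :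
    Commute ⁅a, b⁆ c := by
  have h1 : ⁅a, b * c⁆ = ⁅a, b⁆ * ⁅a, c⁆ := by
    have : ⁅a, b * c⁆ = ⁅a, b⁆ * (b * ⁅a, c⁆ * b⁻¹) := by
      simp only [commutatorElement_def]; group
    rw [this, ← hw.eq, mul_inv_cancel_right]
  have h2 := h.right a (b * c)
  rw [h1] at h2
  have h3 : Commute ⁅a, c⁆ (b * c) := hw.mul_right (h.right a c)
  have h4 : Commute ⁅a, b⁆ (b * c) := by
    have := h2.mul_left h3.inv_left
    rwa [mul_inv_cancel_right] at this
  have := (h.right a b).inv_right.mul_right h4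
  rwa [inv_mul_cancel_left] at this

lemma Engel2.quot {G : Type*} [Group G] (h : Engel2 G) (N : Subgroup G) [N.Normal] :
    Engel2 (G ⧸ N) := by
  intro x y
  induction x using QuotientGroup.induction_on with | _ x
  induction y using QuotientGroup.induction_on with | _ y
  exact (h x y).map (QuotientGroup.mk' N)

lemma engel_central (p : ℕ) (hp : p.Prime) : ∀ (n : ℕ) (G : Type*) [Group G] [Finite G],
    IsPGroup p G → Engel2 G → Nat.card G ≤ p ^ 6 → Nat.card G = n →
    ∀ a b : G, ⁅a, b⁆ ∈ Subgroup.center G := by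
  intro n
  induction n using Nat.strong_induction_on with | _ n ih
  intro G _ _ hG hE hcard hn
  have := Fact.mk hp
  rcases subsingleton_or_nontrivial G with hs | hs
  · intro a b
    rw [Subsingleton.elim ⁅a, b⁆ 1]; exact one_mem _
  have hZ : Nontrivial (Subgroup.center G) := hG.center_nontrivial
  have hcq : Nat.card (G ⧸ Subgroup.center G) < Nat.card G := by
    have h1 := Subgroup.card_eq_card_quotient_mul_card_subgroup (Subgroup.center G)
    have h2 : 1 < Nat.card (Subgroup.center G) := Finite.one_lt_card
    have h3 : 0 < Nat.card (G ⧸ Subgroup.center G) := Nat.card_pos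
    rw [h1]; nlinarith
  have hq := ih _ (hn ▸ hcq) (G ⧸ Subgroup.center G) (hG.to_quotient _) (hE.quot _)
    (hcq.le.trans hcard) rfl
  let Z2 : Subgroup G := (Subgroup.center (G ⧸ Subgroup.center G)).comap
    (QuotientGroup.mk' (Subgroup.center G))
  have hZ2 : ∀ x y : G, ⁅x, y⁆ ∈ Z2 := fun x y => by
    have := hq (x : G ⧸ Subgroup.center G) y
    exact this
  have hZ2' : ∀ x ∈ Z2, ∀ g, ∃ z ∈ Subgroup.center G, x * g * x⁻¹ = z * g := by
    intro x hx g
    refine ⟨x * g * x⁻¹ * g⁻¹, ?_, by group⟩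
    rw [← QuotientGroup.eq_one_iff]
    have := Subgroup.mem_center_iff.mp hx (g : G ⧸ Subgroup.center G)
    simp only [QuotientGroup.mk'_apply, QuotientGroup.mk_mul, QuotientGroup.mk_inv] at this ⊢
    rw [← this]; group
  have hcomm : ∀ x ∈ Z2, ∀ g h : G, Commute x ⁅g, h⁆ := by
    intro x hx g h
    obtain ⟨z, hz, e1⟩ := hZ2' x hx g
    obtain ⟨z', hz', e2⟩ := hZ2' x hx h
    have hz := Subgroup.mem_center_iff.mp hz
    have hz' := Subgroup.mem_center_iff.mp hz'
    have : x * ⁅g, h⁆ * x⁻¹ = ⁅g, h⁆ := by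
      have : x * ⁅g, h⁆ * x⁻¹ = ⁅x * g * x⁻¹, x * h * x⁻¹⁆ := by
        simp only [commutatorElement_def]; group
      rw [this, e1, e2]
      simp only [commutatorElement_def, mul_inv_rev]
      calc z * g * (z' * h) * (g⁻¹ * z⁻¹) * (h⁻¹ * z'⁻¹)
          = z * (g * z') * h * g⁻¹ * (z⁻¹ * h⁻¹) * z'⁻¹ := by group
        _ = (z * (z' * g)) * h * g⁻¹ * (h⁻¹ * z⁻¹) * z'⁻¹ := by
            rw [hz' g]
            have : z⁻¹ * h⁻¹ = h⁻¹ * z⁻¹ := by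
              rw [← mul_inv_rev, ← mul_inv_rev, hz]
            rw [this]
        _ = (z' * z * g) * h * g⁻¹ * (h⁻¹ * z⁻¹) * z'⁻¹ := by rw [← mul_assoc z, ← hz z']
        _ = z' * z * (g * h * g⁻¹ * h⁻¹) * (z' * z)⁻¹ := by group
        _ = g * h * g⁻¹ * h⁻¹ := by
            have : (g * h * g⁻¹ * h⁻¹) * (z' * z) = z' * z * (g * h * g⁻¹ * h⁻¹) := by
              rw [← mul_assoc, hz', mul_assoc z', hz, ← mul_assoc]
            rw [← this, mul_inv_cancel_right]
    have h2 := mul_inv_eq_iff_eq_mul.mp this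
    exact h2
  intro a b
  by_contra hab
  rw [Subgroup.mem_center_iff] at hab
  push Not at hab
  obtain ⟨c, hc⟩ := hab
  have hu : ¬ Commute ⁅a, b⁆ c := fun h => hc h.eq.symm
  have hw : ¬ Commute ⁅a, c⁆ b := fun h => hu (hE.swap a b c h)
  have hv : ¬ Commute ⁅b, c⁆ a := fun h => by
    have := (hE.swap b a c h).inv_left
    rw [commutatorElement_inv] at this
    exact hu this
  let C : G → Subgroup G := fun x => Subgroup.centralizer {x}
  have hC : ∀ x y, y ∈ C x ↔ Commute y x := by
    intro x y
    simp only [C, Subgroup.mem_centralizer_singleton_iff]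
    exact Iff.rfl
  have hCc : ∀ g, Subgroup.center G ≤ C g := by
    intro g x hx
    rw [hC]
    exact (Subgroup.mem_center_iff.mp hx g).symm
  have hZZ : Subgroup.center G ≤ Z2 := by
    intro x hx
    have : (x : G ⧸ Subgroup.center G) = 1 := (QuotientGroup.eq_one_iff x).mpr hx
    show (x : G ⧸ Subgroup.center G) ∈ Subgroup.center (G ⧸ Subgroup.center G)
    rw [this]; exact one_mem _
  have hlt : ∀ {H K : Subgroup G} (x : G), H ≤ K → x ∈ K → x ∉ H → H < K := by
    intro H K x h1 h2 h3
    exact lt_of_le_of_ne h1 (fun h => h3 (h ▸ h2))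
  have s1 : (⊥ : Subgroup G) < Subgroup.center G := bot_lt_iff_ne_bot.mpr
    ((Subgroup.nontrivial_iff_ne_bot _).mp hZ)
  have l1 : Subgroup.center G ≤ Z2 ⊓ C b ⊓ C a ⊓ C c := by
    exact le_inf (le_inf (le_inf hZZ (hCc _)) (hCc _)) (hCc _)
  have s2 : Z2 ⊓ C b ⊓ C a ⊓ C c < Z2 ⊓ C b ⊓ C a := by
    refine hlt ⁅a, b⁆ inf_le_left ?_ ?_
    · exact ⟨⟨hZ2 _ _, (hC _ _).mpr (hE.right a b)⟩, (hC _ _).mpr (hE a b)⟩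
    · intro h; exact hu ((hC _ _).mp h.2)
  have s3 : Z2 ⊓ C b ⊓ C a < Z2 ⊓ C b := by
    refine hlt ⁅b, c⁆ inf_le_left ?_ ?_
    · exact ⟨hZ2 _ _, (hC _ _).mpr (hE b c)⟩
    · intro h; exact hv ((hC _ _).mp h.2)
  have s4 : Z2 ⊓ C b < Z2 := by
    refine hlt ⁅a, c⁆ inf_le_left (hZ2 _ _) ?_
    intro h; exact hw ((hC _ _).mp h.2)
  have l2 : Z2 ≤ C ⁅a, b⁆ ⊓ C ⁅b, c⁆ ⊓ C ⁅a, c⁆ := by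
    intro x hx
    exact ⟨⟨(hC _ _).mpr (hcomm x hx _ _), (hC _ _).mpr (hcomm x hx _ _)⟩,
      (hC _ _).mpr (hcomm x hx _ _)⟩
  have s5 : C ⁅a, b⁆ ⊓ C ⁅b, c⁆ ⊓ C ⁅a, c⁆ < C ⁅a, b⁆ ⊓ C ⁅b, c⁆ := by
    refine hlt b inf_le_left ?_ ?_
    · exact ⟨(hC _ _).mpr (hE.right a b).symm, (hC _ _).mpr (hE b c).symm⟩
    · intro h; exact hw ((hC _ _).mp h.2).symm
  have s6 : C ⁅a, b⁆ ⊓ C ⁅b, c⁆ < C ⁅a, b⁆ := by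
    refine hlt a inf_le_left ((hC _ _).mpr (hE a b).symm) ?_
    intro h; exact hv ((hC _ _).mp h.2).symm
  have s7 : C ⁅a, b⁆ < ⊤ := by
    refine hlt c le_top trivial ?_
    intro h; exact hu ((hC _ _).mp h).symm
  have t1 := card_lt_step hp hG s1
  have t2 := card_lt_step hp hG (lt_of_le_of_lt l1 s2)
  have t3 := card_lt_step hp hG s3
  have t4 := card_lt_step hp hG (lt_of_lt_of_le s4 l2)
  have t5 := card_lt_step hp hG s5
  have t6 := card_lt_step hp hG s6
  have t7 := card_lt_step hp hG s7
  rw [Subgroup.card_top] at t7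
  rw [Subgroup.card_bot] at t1
  have := hp.two_le
  have hpow : p ^ 7 ≤ Nat.card G := by
    calc p ^ 7 = 1 * p * p * p * p * p * p * p := by ring
      _ ≤ _ := by
        refine le_trans ?_ t7
        gcongr
        refine le_trans ?_ t6
        gcongr
        refine le_trans ?_ t5
        gcongr
        refine le_trans ?_ t4
        gcongr
        refine le_trans ?_ t3
        gcongr
        refine le_trans ?_ t2
        gcongr
  have := Nat.pow_lt_pow_right hp.one_lt (show 6 < 7 by norm_num)
  omega

end GroupPart


section CentralLemma

lemma exists_hom_cyclic {A G : Type*} [CommGroup A] [Finite A] [Group G] (z : G)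
    (hz : z ^ Monoid.exponent A = 1) :
    ∃ (f : A →* G) (a : A), f a = z ∧ ∀ h, ∃ k : ℤ, f h = z ^ k := by
  obtain ⟨a, ha⟩ := Monoid.exists_orderOf_eq_exponent (Monoid.ExponentExists.of_finite (G := A))
  have he0 : NeZero (Monoid.exponent A) := ⟨Monoid.exponent_ne_zero_of_finite⟩
  obtain ⟨ζ, hζ⟩ : ∃ ζ : ℂˣ, IsPrimitiveRoot ζ (Monoid.exponent A) := by
    have h := Complex.isPrimitiveRoot_exp (Monoid.exponent A) he0.out
    exact ⟨_, h.isUnit_unit he0.out⟩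
  have hgen : ∀ x : Subgroup.zpowers a, x ∈ Subgroup.zpowers (⟨a, Subgroup.mem_zpowers a⟩ : Subgroup.zpowers a) := by
    rintro ⟨x, k, rfl⟩
    exact ⟨k, by ext; simp⟩
  have ho : orderOf ζ ∣ orderOf (⟨a, Subgroup.mem_zpowers a⟩ : Subgroup.zpowers a) := by
    rw [← hζ.eq_orderOf, Subgroup.orderOf_mk, ha]
  obtain ⟨F, hF⟩ := MonoidHom.domRestrict_surjective ℂ (Subgroup.zpowers a)
    (monoidHomOfForallMemZpowers hgen ho)
  have hFa : F a = ζ := by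
    have := congrArg (fun f => f ⟨a, Subgroup.mem_zpowers a⟩) hF
    simpa using this
  have hFm : ∀ h, F h ∈ Subgroup.zpowers ζ := by
    intro h
    rw [hζ.zpowers_eq, mem_rootsOfUnity, ← map_pow, Monoid.pow_exponent_eq_one, map_one]
  have hgen2 : ∀ x : Subgroup.zpowers ζ, x ∈ Subgroup.zpowers (⟨ζ, Subgroup.mem_zpowers ζ⟩ : Subgroup.zpowers ζ) := by
    rintro ⟨x, k, rfl⟩
    exact ⟨k, by ext; simp⟩
  have ho2 : orderOf z ∣ orderOf (⟨ζ, Subgroup.mem_zpowers ζ⟩ : Subgroup.zpowers ζ) := by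
    rw [Subgroup.orderOf_mk, ← hζ.eq_orderOf]
    exact orderOf_dvd_of_pow_eq_one hz
  let E := monoidHomOfForallMemZpowers hgen2 ho2
  have hE : E ⟨ζ, Subgroup.mem_zpowers ζ⟩ = z := monoidHomOfForallMemZpowers_apply_gen _ _
  refine ⟨E.comp (F.codRestrict _ hFm), a, ?_, ?_⟩
  · rw [← hE]
    simp [MonoidHom.codRestrict, hFa]
  · intro h
    obtain ⟨k, hk⟩ := hgen2 (F.codRestrict _ hFm h)
    refine ⟨k, ?_⟩
    rw [MonoidHom.comp_apply, ← hk, map_zpow, hE]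

lemma central_of_pow {G : Type*} [Group G] [Finite G] (hE : IsEGroup G) (z : G)
    (hz : z ^ Monoid.exponent (Abelianization G) = 1) : z ∈ Subgroup.center G := by
  obtain ⟨f, a, ha, hf⟩ := exists_hom_cyclic (A := Abelianization G) z hz
  obtain ⟨g, rfl⟩ := QuotientGroup.mk_surjective a
  have hg : Commute g z := by
    have := hE (f.comp Abelianization.of) g
    simp only [MonoidHom.comp_apply] at this
    rw [show f (Abelianization.of g) = z from ha] at this
    exact this
  rw [Subgroup.mem_center_iff]
  intro h
  obtain ⟨k, hk⟩ := hf (Abelianization.of h)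
  have h1 := hE (f.comp Abelianization.of) (h * g ^ (1 - k))
  simp only [MonoidHom.comp_apply, map_mul, map_zpow, hk] at h1
  rw [show f (Abelianization.of g) = z from ha, ← zpow_add, add_sub_cancel, zpow_one] at h1
  have h2 : Commute (h * g ^ (1 - k)) z := h1
  have h3 := h2.mul_left ((hg.zpow_left (1 - k)).inv_left)
  rw [mul_inv_cancel_right] at h3
  exact h3

end CentralLemma

section Class2
variable {G : Type*} [Group G]

lemma cl_mul_left (hcl : ∀ a b : G, ⁅a, b⁆ ∈ Subgroup.center G) (a b c : G) :
    ⁅a * b, c⁆ = ⁅a, c⁆ * ⁅b, c⁆ := by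
  have h1 : ⁅a * b, c⁆ = (a * ⁅b, c⁆ * a⁻¹) * ⁅a, c⁆ := by
    simp only [commutatorElement_def]; group
  rw [h1, Subgroup.mem_center_iff.mp (hcl b c) a, mul_inv_cancel_right,
    Subgroup.mem_center_iff.mp (hcl a c)]

lemma cl_mul_right (hcl : ∀ a b : G, ⁅a, b⁆ ∈ Subgroup.center G) (a b c : G) :
    ⁅a, b * c⁆ = ⁅a, b⁆ * ⁅a, c⁆ := by
  have h1 : ⁅a, b * c⁆ = ⁅a, b⁆ * (b * ⁅a, c⁆ * b⁻¹) := by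
    simp only [commutatorElement_def]; group
  rw [h1, Subgroup.mem_center_iff.mp (hcl a c) b, mul_inv_cancel_right]

lemma cl_pow_left (hcl : ∀ a b : G, ⁅a, b⁆ ∈ Subgroup.center G) (a b : G) (n : ℕ) :
    ⁅a ^ n, b⁆ = ⁅a, b⁆ ^ n := by
  induction n with
  | zero => simp
  | succ n ih => rw [pow_succ, cl_mul_left hcl, ih, pow_succ]

lemma cl_pow_right (hcl : ∀ a b : G, ⁅a, b⁆ ∈ Subgroup.center G) (a b : G) (n : ℕ) :
    ⁅a, b ^ n⁆ = ⁅a, b⁆ ^ n := by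
  induction n with
  | zero => simp
  | succ n ih => rw [pow_succ, cl_mul_right hcl, ih, pow_succ]

lemma comm_one_iff (a b : G) : ⁅a, b⁆ = 1 ↔ Commute a b := commutatorElement_eq_one_iff_commute

lemma cl_mul_pow (hcl : ∀ a b : G, ⁅a, b⁆ ∈ Subgroup.center G) (x y : G) (n : ℕ) :
    (x * y) ^ n = x ^ n * y ^ n * ⁅y, x⁆ ^ (n.choose 2) := by
  induction n with
  | zero => simp
  | succ n ih =>
    have hc : ∀ k (g : G), Commute (⁅y, x⁆ ^ k) g := fun k g =>
      ((show Commute ⁅y, x⁆ g from (Subgroup.mem_center_iff.mp (hcl y x) g).symm)).pow_left k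
    have h1 : y ^ n * x = ⁅y, x⁆ ^ n * (x * y ^ n) := by
      rw [← cl_pow_left hcl, commutatorElement_def]; group
    calc (x * y) ^ (n + 1) = x ^ n * y ^ n * ⁅y, x⁆ ^ (n.choose 2) * (x * y) := by rw [pow_succ, ih]
      _ = x ^ n * (y ^ n * x) * y * ⁅y, x⁆ ^ (n.choose 2) := by
        rw [mul_assoc (x ^ n * y ^ n), (hc _ (x * y)).eq]; simp only [mul_assoc]
      _ = x ^ n * (⁅y, x⁆ ^ n * (x * y ^ n * y)) * ⁅y, x⁆ ^ (n.choose 2) := by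
        rw [h1]; simp only [mul_assoc]
      _ = x ^ (n + 1) * y ^ (n + 1) * ⁅y, x⁆ ^ ((n + 1).choose 2) := by
        rw [(hc n _).eq, Nat.choose_succ_succ' n 1, Nat.choose_one_right, pow_add _ n (n.choose (1 + 1)), pow_succ x, pow_succ y]
        simp only [mul_assoc]

lemma cl_commutator_le (hcl : ∀ a b : G, ⁅a, b⁆ ∈ Subgroup.center G) :
    commutator G ≤ Subgroup.center G := by
  rw [commutator_def, Subgroup.commutator_le]
  intro a _ b _
  exact hcl a b

end Class2

section StepThree

lemma pow_p_central (p : ℕ) (hp : p.Prime) {G : Type*} [Group G] [Finite G]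
    (hG : IsPGroup p G) (hE : IsEGroup G) (hcard : Nat.card G ≤ p ^ 6)
    (hcl : ∀ a b : G, ⁅a, b⁆ ∈ Subgroup.center G) (g : G) : g ^ p ∈ Subgroup.center G := by
  have := Fact.mk hp
  by_contra hg
  rw [Subgroup.mem_center_iff] at hg
  push Not at hg
  obtain ⟨h, hh⟩ := hg
  -- choose the two elements
  obtain ⟨x, y, hcp, hcpp⟩ : ∃ x y : G, ⁅x, y⁆ ^ p ≠ 1 ∧ ⁅x, y⁆ ^ (p ^ 2) = 1 := by
    have h0 : ⁅g, h⁆ ^ p ≠ 1 := by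
      rw [← cl_pow_left hcl, Ne, comm_one_iff]
      intro hc; exact hh hc.eq.symm
    obtain ⟨k, hk⟩ := (IsPGroup.iff_orderOf.mp hG) ⁅g, h⁆
    have hk2 : 2 ≤ k := by
      by_contra hlt
      apply h0
      rw [← orderOf_dvd_iff_pow_eq_one, hk]
      calc p ^ k ∣ p ^ 1 := pow_dvd_pow _ (by omega)
        _ = p := pow_one p
    refine ⟨g, h ^ (p ^ (k - 2)), ?_, ?_⟩
    · rw [cl_pow_right hcl, ← pow_mul, ← pow_succ, Ne, ← orderOf_dvd_iff_pow_eq_one, hk]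
      rw [Nat.pow_dvd_pow_iff_le_right hp.one_lt]
      omega
    · rw [cl_pow_right hcl, ← pow_mul, ← pow_add, ← orderOf_dvd_iff_pow_eq_one, hk]
      exact pow_dvd_pow _ (by omega)
  set c := ⁅x, y⁆ with hc
  have hcZ : c ∈ Subgroup.center G := hcl x y
  let C : G → Subgroup G := fun x => Subgroup.centralizer {x}
  have hC : ∀ x y, y ∈ C x ↔ Commute y x := by
    intro x y
    simp only [C, Subgroup.mem_centralizer_singleton_iff]
    exact Iff.rfl
  have hlt : ∀ {H K : Subgroup G} (x : G), H ≤ K → x ∈ K → x ∉ H → H < K := by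
    intro H K x h1 h2 h3
    exact lt_of_le_of_ne h1 (fun h => h3 (h ▸ h2))
  have n1 : ¬ Commute x (y ^ p) := by
    rw [← comm_one_iff, cl_pow_right hcl]; exact hcp
  have n2 : ¬ Commute (x ^ p) y := by
    rw [← comm_one_iff, cl_pow_left hcl]; exact hcp
  have c1 : Commute (x ^ p) (y ^ p) := by
    rw [← comm_one_iff, cl_pow_left hcl, cl_pow_right hcl, ← pow_mul, ← sq]; exact hcpp
  have c2 : Commute (x ^ (p ^ 2)) y := by
    rw [← comm_one_iff, cl_pow_left hcl]; exact hcpp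
  have c3 : Commute x (y ^ (p ^ 2)) := by
    rw [← comm_one_iff, cl_pow_right hcl]; exact hcpp
  have hle : Subgroup.zpowers c ≤ C y ⊓ C x := by
    rw [Subgroup.zpowers_le]
    exact ⟨(hC _ _).mpr (Subgroup.mem_center_iff.mp hcZ y).symm,
      (hC _ _).mpr (Subgroup.mem_center_iff.mp hcZ x).symm⟩
  have hmain : C y ⊓ C x ≤ Subgroup.zpowers c := by
    by_contra hnot
    have s3 : Subgroup.zpowers c < C y ⊓ C x := lt_of_le_not_ge hle hnot
    have s1 : (⊥ : Subgroup G) < Subgroup.zpowers (c ^ p) :=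
      hlt (c ^ p) bot_le (Subgroup.mem_zpowers _) (by rwa [Subgroup.mem_bot])
    have s2 : Subgroup.zpowers (c ^ p) < Subgroup.zpowers c := by
      refine hlt c ?_ (Subgroup.mem_zpowers _) ?_
      · rw [Subgroup.zpowers_le]; exact Subgroup.npow_mem_zpowers c p
      · rintro ⟨k, hk⟩
        simp only at hk
        apply hcp
        rw [← hk, ← zpow_natCast, ← zpow_mul, mul_comm, zpow_mul, zpow_natCast, ← pow_mul, ← sq,
          hcpp, one_zpow]
    have s4 : C y ⊓ C x < C y ⊓ C (x ^ p) := by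
      refine hlt (y ^ p) ?_ ?_ ?_
      · intro z hz
        exact ⟨hz.1, (hC _ _).mpr (((hC _ _).mp hz.2).pow_right p)⟩
      · exact ⟨(hC _ _).mpr ((Commute.refl y).pow_left p), (hC _ _).mpr c1.symm⟩
      · intro hz
        exact n1 ((hC _ _).mp hz.2).symm
    have s5 : C y ⊓ C (x ^ p) < C y := by
      refine hlt y inf_le_left ((hC _ _).mpr (Commute.refl y)) ?_
      intro hz
      exact n2 ((hC _ _).mp hz.2).symm
    have s6 : C y < C (y ^ p) := by
      refine hlt (x ^ p) ?_ ((hC _ _).mpr c1) ?_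
      · intro z hz
        exact (hC _ _).mpr (((hC _ _).mp hz).pow_right p)
      · intro hz
        exact n2 ((hC _ _).mp hz)
    have s7 : C (y ^ p) < ⊤ := by
      refine hlt x le_top trivial ?_
      intro hz
      exact n1 ((hC _ _).mp hz)
    have t1 := card_lt_step hp hG s1
    have t2 := card_lt_step hp hG s2
    have t3 := card_lt_step hp hG s3
    have t4 := card_lt_step hp hG s4
    have t5 := card_lt_step hp hG s5
    have t6 := card_lt_step hp hG s6
    have t7 := card_lt_step hp hG s7
    rw [Subgroup.card_top] at t7
    rw [Subgroup.card_bot] at t1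
    have hpow : p ^ 7 ≤ Nat.card G := by
      calc p ^ 7 = 1 * p * p * p * p * p * p * p := by ring
        _ ≤ _ := by
          refine le_trans ?_ t7
          gcongr
          refine le_trans ?_ t6
          gcongr
          refine le_trans ?_ t5
          gcongr
          refine le_trans ?_ t4
          gcongr
          refine le_trans ?_ t3
          gcongr
          refine le_trans ?_ t2
          gcongr
    have := Nat.pow_lt_pow_right hp.one_lt (show 6 < 7 by norm_num)
    omega
  obtain ⟨i, hi⟩ : x ^ (p ^ 2) ∈ Subgroup.zpowers c :=
    hmain ⟨(hC _ _).mpr c2, (hC _ _).mpr ((Commute.refl x).pow_left _)⟩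
  obtain ⟨j, hj⟩ : y ^ (p ^ 2) ∈ Subgroup.zpowers c :=
    hmain ⟨(hC _ _).mpr ((Commute.refl y).pow_left _), (hC _ _).mpr c3.symm⟩
  simp only at hi hj
  have hcz : ∀ m : ℤ, (p : ℤ) ∣ m → (c ^ m) ^ p = 1 := by
    rintro m ⟨l, rfl⟩
    rw [← zpow_natCast, ← zpow_mul, show (p : ℤ) * l * p = ((p ^ 2 : ℕ) : ℤ) * l by push_cast; ring,
      zpow_mul, zpow_natCast, hcpp, one_zpow]
  have hdvd : p ^ 2 ∣ Monoid.exponent (Abelianization G) := by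
    have ho : orderOf c = p ^ 2 := by
      refine orderOf_eq_prime_pow (n := 1) (by rwa [pow_one]) hcpp
    rw [← ho]
    apply orderOf_dvd_of_pow_eq_one
    rw [hc, ← cl_pow_left hcl, comm_one_iff]
    have hx : x ^ Monoid.exponent (Abelianization G) ∈ Subgroup.center G := by
      apply cl_commutator_le hcl
      rw [← Abelianization.ker_of, MonoidHom.mem_ker, map_pow, Monoid.pow_exponent_eq_one]
    exact (Subgroup.mem_center_iff.mp hx y).symm
  have hcen : ∀ t : G, t ^ (p ^ 2) = 1 → t ∈ Subgroup.center G := by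
    intro t ht
    apply central_of_pow hE
    rw [← orderOf_dvd_iff_pow_eq_one] at ht ⊢
    exact ht.trans hdvd
  by_cases hpi : (p : ℤ) ∣ i
  · have := hcen (x ^ p) (by
      rw [← pow_mul, mul_comm, pow_mul, ← hi]
      exact hcz i hpi)
    exact n2 (Subgroup.mem_center_iff.mp this y).symm
  · have hco : IsCoprime i (p : ℤ) :=
      ((Nat.prime_iff_prime_int.mp hp).coprime_iff_not_dvd.mpr hpi).symm
    obtain ⟨a, b, hab⟩ := hco
    have hcm : Commute (y ^ p) ((x ^ p) ^ (-(a * j))) := c1.symm.zpow_right _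
    have := hcen (y ^ p * (x ^ p) ^ (-(a * j))) (by
      rw [hcm.mul_pow, ← pow_mul, mul_comm p, pow_mul, ← hj, ← zpow_natCast ((x ^ p) ^ _),
        ← zpow_mul, mul_comm (-(a * j)), zpow_mul, zpow_natCast, ← pow_mul x, mul_comm p, pow_mul x,
        ← hi, ← zpow_natCast (c ^ i), ← zpow_mul, ← zpow_mul, ← zpow_natCast (c ^ j),
        ← zpow_mul, ← zpow_add,
        show j * p + i * (p * -(a * j)) = (p * (b * j)) * p by
          linear_combination (-(j * p : ℤ)) * hab, zpow_mul, zpow_natCast]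
      exact hcz _ ⟨_, rfl⟩)
    have h1 : Commute x (y ^ p * (x ^ p) ^ (-(a * j))) := Subgroup.mem_center_iff.mp this x
    have h2 : Commute x ((x ^ p) ^ (-(a * j))) :=
      ((Commute.refl x).pow_right p).zpow_right _
    have h3 := h1.mul_right h2.inv_right
    rw [mul_inv_cancel_right] at h3
    exact n1 h3

end StepThree

section Lift

lemma exists_lift {p : ℕ} (hp : p.Prime) {G V W : Type*} [Group G] [Finite G] [Group V] [Group W]
    (π : G →* V) (hπ : Function.Surjective π) (ι : W →* G) (hπι : ∀ w, π (ι w) = 1)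
    (A : V →* V) (B : W →* W)
    (h1 : ∀ g g' h h', π h = A (π g) → π h' = A (π g') →
      ∃ w, ι w = ⁅g, g'⁆ ∧ ι (B w) = ⁅h, h'⁆)
    (h2 : ∀ g h, π h = A (π g) → ∃ w, ι w = g ^ p ∧ ι (B w) = h ^ p)
    (hιB : ∀ w, ι w = 1 → ι (B w) = 1) :
    ∃ φ : G →* G, ∀ g, π (φ g) = A (π g) := by
  let H0 : Subgroup (G × G) := MonoidHom.eqLocus (π.comp (MonoidHom.snd G G))
    ((A.comp π).comp (MonoidHom.fst G G))
  have hH0 : ∀ x : G × G, x ∈ H0 ↔ π x.2 = A (π x.1) := fun x => Iff.rfl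
  let N : Subgroup (G × G) := (ι.prod (ι.comp B)).range
  have hN : ∀ w, (ι w, ι (B w)) ∈ N := fun w => ⟨w, rfl⟩
  have hNH : N ≤ H0 := by
    rintro _ ⟨w, rfl⟩
    rw [hH0]
    simp [hπι]
  have hcN : ∀ a ∈ H0, ∀ b ∈ H0, ⁅a, b⁆ ∈ N := by
    intro a ha b hb
    obtain ⟨w, e1, e2⟩ := h1 a.1 b.1 a.2 b.2 ha hb
    have : ⁅a, b⁆ = (ι w, ι (B w)) := by
      rw [e1, e2]; rfl
    rw [this]; exact hN w
  have hpN : ∀ a ∈ H0, a ^ p ∈ N := by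
    intro a ha
    obtain ⟨w, e1, e2⟩ := h2 a.1 a.2 ha
    have : a ^ p = (ι w, ι (B w)) := by
      rw [e1, e2]; rfl
    rw [this]; exact hN w
  let S : Set (Subgroup (G × G)) := {K | N ≤ K ∧ K ≤ H0 ∧ ∀ h, ((1 : G), h) ∈ K → h = 1}
  have hNS : N ∈ S := by
    refine ⟨le_rfl, hNH, ?_⟩
    rintro h ⟨w, hw⟩
    have e1 : ι w = 1 := congrArg Prod.fst hw
    have e2 : ι (B w) = h := congrArg Prod.snd hw
    rw [← e2, hιB w e1]
  obtain ⟨K, hK⟩ := (Set.toFinite S).exists_maximal ⟨N, hNS⟩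
  obtain ⟨hNK, hKH, hKi⟩ := hK.prop
  have hconj : ∀ a ∈ H0, ∀ κ ∈ K, a * κ * a⁻¹ ∈ K := by
    intro a ha κ hκ
    have h1 := K.mul_mem (hNK (hcN a ha κ (hKH hκ))) hκ
    rwa [commutatorElement_def, inv_mul_cancel_right] at h1
  have hproj : ∀ g, ∃ h, (g, h) ∈ K := by
    by_contra! hcon
    obtain ⟨g, hg⟩ := hcon
    obtain ⟨h, hh⟩ := hπ (A (π g))
    set k : G × G := (g, h) with hk
    have hkH : k ∈ H0 := hh
    let K' : Subgroup (G × G) :=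
      { carrier := {x | ∃ κ ∈ K, ∃ n : ℤ, x = κ * k ^ n}
        one_mem' := ⟨1, one_mem _, 0, by simp⟩
        mul_mem' := by
          rintro _ _ ⟨κ, hκ, n, rfl⟩ ⟨κ', hκ', m, rfl⟩
          refine ⟨κ * (k ^ n * κ' * (k ^ n)⁻¹), K.mul_mem hκ (hconj _ (zpow_mem hkH n) _ hκ'),
            n + m, ?_⟩
          rw [zpow_add]; group
        inv_mem' := by
          rintro _ ⟨κ, hκ, n, rfl⟩
          refine ⟨(k ^ (-n)) * κ⁻¹ * (k ^ (-n))⁻¹, hconj _ (zpow_mem hkH _) _ (inv_mem hκ), -n, ?_⟩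
          group }
    have hKK' : K ≤ K' := fun κ hκ => ⟨κ, hκ, 0, by simp⟩
    have hkK' : k ∈ K' := ⟨1, one_mem _, 1, by simp⟩
    have hS' : K' ∈ S := by
      refine ⟨hNK.trans hKK', ?_, ?_⟩
      · rintro _ ⟨κ, hκ, n, rfl⟩
        exact H0.mul_mem (hKH hκ) (zpow_mem hkH n)
      · rintro h' ⟨κ, hκ, n, hn⟩
        by_cases hpn : (p : ℤ) ∣ n
        · obtain ⟨m, rfl⟩ := hpn
          apply hKi
          rw [hn, zpow_mul, zpow_natCast]
          exact K.mul_mem hκ (zpow_mem (hNK (hpN k hkH)) m)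
        · exfalso
          have hP : ∀ x, x ∈ K.map (MonoidHom.fst G G) ↔ ∃ y, (x, y) ∈ K := by
            intro x
            simp [Subgroup.mem_map]
          have m1 : g ^ n ∈ K.map (MonoidHom.fst G G) := by
            have e1 : 1 = κ.1 * g ^ n := congrArg Prod.fst hn
            rw [eq_inv_of_mul_eq_one_right e1.symm]
            exact inv_mem ⟨κ, hκ, rfl⟩
          have m2 : g ^ p ∈ K.map (MonoidHom.fst G G) := ⟨k ^ p, hNK (hpN k hkH), rfl⟩
          obtain ⟨a, c, hac⟩ : IsCoprime n (p : ℤ) :=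
            ((Nat.prime_iff_prime_int.mp hp).coprime_iff_not_dvd.mpr hpn).symm
          have m3 : g ∈ K.map (MonoidHom.fst G G) := by
            have : g = (g ^ n) ^ a * (g ^ p) ^ c := by
              rw [← zpow_natCast g p, ← zpow_mul, ← zpow_mul, ← zpow_add]
              rw [show n * a + p * c = 1 by linear_combination hac, zpow_one]
            rw [this]
            exact mul_mem (zpow_mem m1 a) (zpow_mem m2 c)
          obtain ⟨y, hy⟩ := (hP g).mp m3
          exact hg y hy
    exact hg h (hK.le_of_ge hS' hKK' hkK')
  choose f hf using hproj
  have huniq : ∀ g h h', (g, h) ∈ K → (g, h') ∈ K → h = h' := by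
    intro g h h' e1 e2
    have := K.mul_mem (inv_mem e1) e2
    have e3 : ((1 : G), h⁻¹ * h') ∈ K := by
      have e4 : (g, h)⁻¹ * (g, h') = ((1 : G), h⁻¹ * h') := by simp
      rwa [e4] at this
    exact inv_mul_eq_one.mp (hKi _ e3)
  refine ⟨MonoidHom.mk' f ?_, ?_⟩
  · intro x y
    exact huniq _ _ _ (hf _) (K.mul_mem (hf x) (hf y))
  · intro g
    exact hKH (hf g)

end Lift

section Core

variable {p : ℕ} {G V W : Type*} [Group G] [AddCommGroup V] [AddCommGroup W]
  [Module (ZMod p) V] [Module (ZMod p) W]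

lemma exists_form (hcl : ∀ a b : G, ⁅a, b⁆ ∈ Subgroup.center G)
    (π : G → V) (hπm : ∀ g h, π (g * h) = π g + π h) (hπs : Function.Surjective π)
    (ι : W → G) (hιa : ∀ v w, ι (v + w) = ι v * ι w) (hιi : Function.Injective ι)
    (hιs : ∀ d ∈ commutator G, ∃ w, ι w = d) (hk : ∀ g, π g = 0 → g ∈ Subgroup.center G) :
    ∃ b : V →ₗ[ZMod p] V →ₗ[ZMod p] W, ∀ g h, ι (b (π g) (π h)) = ⁅g, h⁆ := by
  choose s hs using hπs
  choose κ hκ using fun g h : G => hιs ⁅g, h⁆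
    (Subgroup.commutator_mem_commutator (Subgroup.mem_top g) (Subgroup.mem_top h))
  have h1 : π 1 = 0 := by
    have := hπm 1 1
    simpa using this
  have hinv : ∀ g, π g⁻¹ = - π g := by
    intro g
    rw [eq_neg_iff_add_eq_zero, ← hπm, inv_mul_cancel, h1]
  have hz : ∀ g g', π g = π g' → ∃ z ∈ Subgroup.center G, g' = g * z := by
    intro g g' h
    exact ⟨g⁻¹ * g', hk _ (by rw [hπm, hinv, h, neg_add_cancel]), by group⟩
  have hzl : ∀ z ∈ Subgroup.center G, ∀ g : G, ⁅z, g⁆ = 1 := by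
    intro z hz g
    rw [comm_one_iff]
    exact (Subgroup.mem_center_iff.mp hz g).symm
  have hzr : ∀ z ∈ Subgroup.center G, ∀ g : G, ⁅g, z⁆ = 1 := by
    intro z hz g
    rw [comm_one_iff]
    exact (Subgroup.mem_center_iff.mp hz g)
  have hwd : ∀ g g' h h', π g = π g' → π h = π h' → ⁅g, h⁆ = ⁅g', h'⁆ := by
    intro g g' h h' e1 e2
    obtain ⟨z, hz1, rfl⟩ := hz g g' e1
    obtain ⟨z', hz2, rfl⟩ := hz h h' e2
    rw [cl_mul_left hcl, cl_mul_right hcl, hzl z hz1, hzr z' hz2, mul_one, mul_one]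
  let b1 : V → V →ₗ[ZMod p] W := fun v =>
    (AddMonoidHom.mk' (fun w => κ (s v) (s w)) (by
      intro x y
      apply hιi
      rw [hιa, hκ, hκ, hκ, ← cl_mul_right hcl]
      exact hwd _ _ _ _ rfl (by rw [hπm, hs, hs, hs]))).toZModLinearMap p
  have hb1 : ∀ v w, b1 v w = κ (s v) (s w) := fun v w => rfl
  refine ⟨(AddMonoidHom.mk' b1 (by
      intro x y
      ext w
      rw [LinearMap.add_apply, hb1, hb1, hb1]
      apply hιi
      rw [hιa, hκ, hκ, hκ, ← cl_mul_left hcl]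
      exact hwd _ _ _ _ (by rw [hπm, hs, hs, hs]) rfl)).toZModLinearMap p, ?_⟩
  intro g h
  show ι (b1 (π g) (π h)) = _
  rw [hb1, hκ]
  exact hwd _ _ _ _ (hs _) (hs _)

lemma contra_of_bad [Finite G] (hp : p.Prime) (hE : IsEGroup G)
    (π : G → V) (hπm : ∀ g h, π (g * h) = π g + π h) (hπs : Function.Surjective π)
    (ι : W → G) (hιa : ∀ v w, ι (v + w) = ι v * ι w) (hιi : Function.Injective ι)
    (hπι : ∀ w, π (ι w) = 0)
    (b : V →ₗ[ZMod p] V →ₗ[ZMod p] W) (hb : ∀ g h, ι (b (π g) (π h)) = ⁅g, h⁆)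
    (Q : V → W) (hQ : ∀ g, ι (Q (π g)) = g ^ p) (hbad : HasBadPair b Q) : False := by
  obtain ⟨A, B, h1, h2, x, hx⟩ := hbad
  have hι0 : ι 0 = 1 := by
    have := hιa 0 0
    simpa using this
  let π' : G →* Multiplicative V := MonoidHom.mk' (fun g => Multiplicative.ofAdd (π g)) (by
    intro g h; rw [hπm]; rfl)
  let ι' : Multiplicative W →* G := MonoidHom.mk' (fun w => ι w.toAdd) (by
    intro g h; exact hιa _ _)
  obtain ⟨φ, hφ⟩ := exists_lift hp π' hπs ι' hπι (AddMonoidHom.toMultiplicative A.toAddMonoidHom)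
    (AddMonoidHom.toMultiplicative B.toAddMonoidHom) (by
      intro g g' h h' e1 e2
      have e1 : π h = A (π g) := e1
      have e2 : π h' = A (π g') := e2
      refine ⟨Multiplicative.ofAdd (b (π g) (π g')), hb _ _, ?_⟩
      show ι (B (b (π g) (π g'))) = _
      rw [← h1, ← e1, ← e2, hb]) (by
      intro g h e1
      have e1 : π h = A (π g) := e1
      refine ⟨Multiplicative.ofAdd (Q (π g)), hQ _, ?_⟩
      show ι (B (Q (π g))) = _
      rw [← h2, ← e1, hQ]) (by
      intro w hw
      have : w.toAdd = 0 := hιi (by rw [hι0]; exact hw)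
      show ι (B w.toAdd) = 1
      rw [this, map_zero, hι0])
  obtain ⟨g, rfl⟩ := hπs x
  apply hx
  have e : π (φ g) = A (π g) := hφ g
  apply hιi
  rw [← e, hb, hι0, comm_one_iff]
  exact hE φ g

lemma core [Finite G] (hp : p.Prime) (hE : IsEGroup G) (hcard : Nat.card G ≤ p ^ 6)
    (hcl : ∀ a b : G, ⁅a, b⁆ ∈ Subgroup.center G)
    (π : G → V) (hπm : ∀ g h, π (g * h) = π g + π h) (hπs : Function.Surjective π)
    (ι : W → G) (hιa : ∀ v w, ι (v + w) = ι v * ι w) (hιi : Function.Injective ι)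
    (hιm : ∀ w, ι w ∈ commutator G)
    (hιs : ∀ d ∈ commutator G, ∃ w, ι w = d) (hk : ∀ g, π g = 0 → g ∈ Subgroup.center G)
    (q : ℕ) (hq : ∀ g : G, g ^ q ∈ commutator G) (hkq : ∀ g, π g = 0 ↔ g ^ q = 1)
    (hqp : q = p ∨ p ^ 2 ∣ q) (hqmin : (∀ g : G, g ^ p ∈ commutator G) → q = p)
    (hnc : ∃ x y : G, ⁅x, y⁆ ≠ 1) : False := by
  have := Fact.mk hp
  obtain ⟨b, hb⟩ := exists_form (p := p) hcl π hπm hπs ι hιa hιi hιs hk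
  have hι0 : ι 0 = 1 := by
    have := hιa 0 0
    simpa using this
  have hπ1 : π 1 = 0 := by
    have := hπm 1 1
    simpa using this
  have hinv : ∀ g, π g⁻¹ = - π g := by
    intro g
    rw [eq_neg_iff_add_eq_zero, ← hπm, inv_mul_cancel, hπ1]
  have hπι : ∀ w, π (ι w) = 0 := by
    intro w
    let π' : G →* Multiplicative V := MonoidHom.mk' (fun g => Multiplicative.ofAdd (π g)) (by
      intro g h; rw [hπm]; rfl)
    have : commutator G ≤ π'.ker := by
      rw [commutator_def, Subgroup.commutator_le]
      intro x _ y _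
      rw [MonoidHom.mem_ker, map_commutatorElement, comm_one_iff]
      exact Commute.all _ _
    exact this (hιm w)
  have hVfin : Finite V := Finite.of_surjective π hπs
  have hWfin : Finite W := Finite.of_injective ι hιi
  have halt : ∀ x, b x x = 0 := by
    intro x
    obtain ⟨g, rfl⟩ := hπs x
    apply hιi
    rw [hb, hι0, comm_one_iff]
  have hne : ∃ x y, b x y ≠ 0 := by
    obtain ⟨x, y, hxy⟩ := hnc
    refine ⟨π x, π y, fun h => hxy ?_⟩
    rw [← hb, h, hι0]
  have hspan : Submodule.span (ZMod p) {w | ∃ x y, b x y = w} = ⊤ := by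
    rw [eq_top_iff]
    intro w _
    have key : ∀ d ∈ commutator G,
        ∃ w ∈ Submodule.span (ZMod p) {w | ∃ x y, b x y = w}, ι w = d := by
      let T : Subgroup G :=
        { carrier := {d | ∃ w ∈ Submodule.span (ZMod p) {w | ∃ x y, b x y = w}, ι w = d}
          one_mem' := ⟨0, zero_mem _, hι0⟩
          mul_mem' := by
            rintro _ _ ⟨w, hw, rfl⟩ ⟨w', hw', rfl⟩
            exact ⟨w + w', add_mem hw hw', hιa _ _⟩
          inv_mem' := by
            rintro _ ⟨w, hw, rfl⟩
            refine ⟨-w, neg_mem hw, ?_⟩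
            rw [eq_inv_iff_mul_eq_one, ← hιa, neg_add_cancel, hι0] }
      have : commutator G ≤ T := by
        rw [commutator_def, Subgroup.commutator_le]
        intro x _ y _
        exact ⟨b (π x) (π y), Submodule.subset_span ⟨_, _, rfl⟩, hb _ _⟩
      exact this
    obtain ⟨w', hw', e⟩ := key (ι w) (hιm w)
    rwa [← hιi e]
  choose s hs using id hπs
  choose κ hκ using fun g : G => hιs (g ^ q) (hq g)
  let Q : V → W := fun v => κ (s v)
  have hQ : ∀ g, ι (Q (π g)) = g ^ q := by
    intro g
    rw [hκ]
    set g' := s (π g) with hg'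
    have e : π (g⁻¹ * g') = 0 := by rw [hπm, hinv, hg', hs, neg_add_cancel]
    have hz := hk _ e
    have hz2 := (hkq _).mp e
    have e2 : g' = g * (g⁻¹ * g') := by group
    rw [e2, Commute.mul_pow (Subgroup.mem_center_iff.mp hz g), hz2, mul_one]
  have hQ0 : ∀ x, Q x = 0 → x = 0 := by
    intro x hx
    obtain ⟨g, rfl⟩ := hπs x
    rw [hkq, ← hQ, hx, hι0]
  have hιn : ∀ (n : ℕ) w, ι (n • w) = ι w ^ n := by
    intro n w
    induction n with
    | zero => simp [hι0]
    | succ n ih => rw [succ_nsmul, hιa, ih, pow_succ]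
  have hQadd : ∀ x y, Q (x + y) = Q x + Q y + (q.choose 2) • b y x := by
    intro x y
    obtain ⟨g, rfl⟩ := hπs x
    obtain ⟨h, rfl⟩ := hπs y
    apply hιi
    rw [hιa, hιa, hιn, hb, ← hπm, hQ, hQ, hQ, cl_mul_pow hcl]
  have hinj : Function.Injective (fun vw : V × W => s vw.1 * ι vw.2) := by
    rintro ⟨v, w⟩ ⟨v', w'⟩ h
    simp only at h
    have e := congrArg π h
    rw [hπm, hπm, hπι, hπι, hs, hs, add_zero, add_zero] at e
    subst e
    rw [mul_right_inj] at h
    rw [hιi h]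
  have hcVW : Nat.card V * Nat.card W = p ^ (finrank (ZMod p) V + finrank (ZMod p) W) := by
    rw [Module.natCard_eq_pow_finrank (K := ZMod p) (V := V),
      Module.natCard_eq_pow_finrank (K := ZMod p) (V := W), Nat.card_zmod, pow_add]
  have hcle : Nat.card V * Nat.card W ≤ Nat.card G := by
    rw [← Nat.card_prod]
    exact Nat.card_le_card_of_injective _ hinj
  have hdim : finrank (ZMod p) V + finrank (ZMod p) W ≤ 6 := by
    rw [← Nat.pow_le_pow_iff_right hp.one_lt, ← hcVW]
    exact hcle.trans hcard
  have hlin : p ∣ q.choose 2 → ∀ x y, Q (x + y) = Q x + Q y := by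
    rintro ⟨m, hm⟩ x y
    rw [hQadd, hm, mul_comm, mul_nsmul, ← Nat.cast_smul_eq_nsmul (ZMod p) p]
    simp
  have hqeq : q = p := by
    rcases hqp with h | h
    · exact h
    · obtain ⟨hV3, hW3⟩ := finrank33_of_linear b halt hspan hne Q (hlin (by
        have h2 : 2 * q.choose 2 = q * (q - 1) := by
          rw [Nat.choose_two_right, Nat.mul_div_cancel' (Nat.even_mul_pred_self q).two_dvd]
        by_cases hp2 : p = 2
        · subst hp2
          obtain ⟨m, rfl⟩ := h
          refine ⟨m * (2 ^ 2 * m - 1), ?_⟩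
          apply Nat.eq_of_mul_eq_mul_left (show 0 < 2 by norm_num)
          rw [h2]; ring
        · have h3 : p ∣ 2 * q.choose 2 := by
            rw [h2]
            exact Dvd.dvd.mul_right ((dvd_pow_self p two_ne_zero).trans h) _
          rcases (Nat.Prime.dvd_mul hp).mp h3 with h4 | h4
          · exact absurd ((Nat.prime_dvd_prime_iff_eq hp Nat.prime_two).mp h4) hp2
          · exact h4)) hQ0 hdim
      apply hqmin
      rw [hV3, hW3] at hcVW
      norm_num at hcVW
      have hbij : Function.Bijective (fun vw : V × W => s vw.1 * ι vw.2) := by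
        refine (Nat.bijective_iff_injective_and_card _).mpr ⟨hinj, ?_⟩
        rw [Nat.card_prod]
        omega
      have hsurj : ∀ g, π g = 0 → ∃ w, g = s 0 * ι w := by
        intro g hg
        obtain ⟨⟨v, w⟩, h⟩ := hbij.2 g
        simp only at h
        have e := congrArg π h
        rw [hπm, hs, hπι, add_zero, hg] at e
        exact ⟨w, by rw [← h, e]⟩
      have hs0 : s 0 ∈ commutator G := by
        obtain ⟨w, hw⟩ := hsurj 1 hπ1
        rw [eq_inv_of_mul_eq_one_left hw.symm]
        exact inv_mem (hιm w)
      intro g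
      have hπn : ∀ n : ℕ, π (g ^ n) = n • π g := by
        intro n
        induction n with
        | zero => simp [hπ1]
        | succ n ih => rw [pow_succ, hπm, ih, succ_nsmul]
      obtain ⟨w, hw⟩ := hsurj (g ^ p) (by
        rw [hπn, ← Nat.cast_smul_eq_nsmul (ZMod p) p]; simp)
      rw [hw]
      exact mul_mem hs0 (hιm w)
  subst hqeq
  refine contra_of_bad hp hE π hπm hπs ι hιa hιi hπι b hb Q hQ ?_
  by_cases hp2 : q = 2
  · subst hp2
    refine bad_two b Q halt ?_ hQ0 hspan hne hdim
    intro x y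
    rw [hQadd, symm_two b halt x y]
    simp
  · refine bad_of_linear b hp2 halt hspan hne Q (hlin ?_) hQ0 hdim
    rw [Nat.choose_two_right]
    obtain ⟨k, hk⟩ := hp.odd_of_ne_two hp2
    refine ⟨k, ?_⟩
    have : q * (q - 1) = 2 * (q * k) := by
      have : q - 1 = 2 * k := by omega
      rw [this]; ring
    rw [this]; simp

end Core

section Final

lemma IsEGroup.engel {G : Type*} [Group G] (hE : IsEGroup G) : Engel2 G := by
  intro x y
  have h : Commute x (y * x * y⁻¹) := hE (MulAut.conj y).toMonoidHom x
  have e : ⁅x, y⁆ = x * (y * x * y⁻¹)⁻¹ := by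
    rw [commutatorElement_def]; group
  rw [e]
  exact ((Commute.refl x).mul_right h.inv_right).symm

lemma final_step (p : ℕ) (hp : p.Prime) {G : Type*} [Group G] [Finite G]
    (hG : IsPGroup p G) (hE : IsEGroup G) (hcard : Nat.card G ≤ p ^ 6)
    (hnc : ∃ x y : G, ⁅x, y⁆ ≠ 1) : False := by
  have := Fact.mk hp
  have hcl := engel_central p hp _ G hG hE.engel hcard rfl
  have hpc := pow_p_central p hp hG hE hcard hcl
  have hcc := cl_commutator_le hcl
  have hcp : ∀ x y : G, ⁅x, y⁆ ^ p = 1 := by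
    intro x y
    rw [← cl_pow_left hcl, comm_one_iff]
    exact (Subgroup.mem_center_iff.mp (hpc x) y).symm
  -- elements of the centre killed by a power form a subgroup
  let K : ℕ → Subgroup G := fun n =>
    { carrier := {x | x ∈ Subgroup.center G ∧ x ^ n = 1}
      one_mem' := ⟨one_mem _, one_pow n⟩
      mul_mem' := by
        rintro a b ⟨ha, ha'⟩ ⟨hb, hb'⟩
        refine ⟨mul_mem ha hb, ?_⟩
        have hc : Commute a b := (Subgroup.mem_center_iff.mp ha b).symm
        rw [hc.mul_pow, ha', hb', one_mul]
      inv_mem' := by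
        rintro a ⟨ha, ha'⟩
        exact ⟨inv_mem ha, by rw [inv_pow, ha', inv_one]⟩ }
  have hK : ∀ n x, x ∈ K n ↔ x ∈ Subgroup.center G ∧ x ^ n = 1 := fun n x => Iff.rfl
  have hcK : commutator G ≤ K p := by
    rw [commutator_def, Subgroup.commutator_le]
    intro x _ y _
    exact ⟨hcl x y, hcp x y⟩
  obtain ⟨q, hqdef⟩ : ∃ q, q = Monoid.exponent (Abelianization G) := ⟨_, rfl⟩
  have hmem : ∀ g : G, g ∈ commutator G ↔ Abelianization.of g = 1 := by
    intro g
    rw [← MonoidHom.mem_ker, Abelianization.ker_of]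
  have hq : ∀ g : G, g ^ q ∈ commutator G := by
    intro g
    rw [hmem, map_pow, hqdef, Monoid.pow_exponent_eq_one]
  have hAdvd : ∀ n : ℕ, (∀ g : G, g ^ n ∈ commutator G) → q ∣ n := by
    intro n hn
    rw [hqdef]
    apply Monoid.exponent_dvd_of_forall_pow_eq_one
    intro a
    obtain ⟨g, rfl⟩ := QuotientGroup.mk_surjective a
    exact (map_pow Abelianization.of g n).symm.trans ((hmem _).mp (hn g))
  have hq1 : q ≠ 1 := by
    intro h
    obtain ⟨x, y, hxy⟩ := hnc
    apply hxy
    rw [comm_one_iff]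
    have := hcc (hq x)
    rw [h, pow_one] at this
    exact (Subgroup.mem_center_iff.mp this y).symm
  obtain ⟨n, hn⟩ := IsPGroup.iff_card.mp hG
  have hqpow : ∃ r, q = p ^ r := by
    have : q ∣ p ^ n := hAdvd _ (fun g => by
      rw [← hn, pow_card_eq_one']; exact one_mem _)
    obtain ⟨r, _, hr⟩ := (Nat.dvd_prime_pow hp).mp this
    exact ⟨r, hr⟩
  obtain ⟨r, hr⟩ := hqpow
  have hr0 : r ≠ 0 := by
    rintro rfl
    exact hq1 (by rw [hr, pow_zero])
  have hpq : p ∣ q := by rw [hr]; exact dvd_pow_self p hr0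
  have hqp : q = p ∨ p ^ 2 ∣ q := by
    rcases Nat.lt_or_ge r 2 with h | h
    · left
      have : r = 1 := by omega
      rw [hr, this, pow_one]
    · right
      rw [hr]; exact pow_dvd_pow p h
  have hqmin : (∀ g : G, g ^ p ∈ commutator G) → q = p := by
    intro h
    exact ((Nat.dvd_prime hp).mp (hAdvd p h)).resolve_left hq1
  have hKq : ∀ x, x ∈ K q ↔ x ^ q = 1 := by
    intro x
    rw [hK]
    refine ⟨fun h => h.2, fun h => ⟨central_of_pow hE x (by rw [← hqdef]; exact h), h⟩⟩
  have hcKq : commutator G ≤ K q := by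
    intro d hd
    obtain ⟨h1, h2⟩ := hcK hd
    obtain ⟨k, hk⟩ := hpq
    exact ⟨h1, by rw [hk, pow_mul, h2, one_pow]⟩
  have hnorm : (K q).Normal := by
    constructor
    intro a ha g
    have : g * a * g⁻¹ = a := by
      rw [Subgroup.mem_center_iff.mp ha.1 g]; group
    rw [this]; exact ha
  letI : CommGroup (G ⧸ K q) := { (inferInstance : Group (G ⧸ K q)) with
    mul_comm := by
      intro a b
      obtain ⟨x, rfl⟩ := QuotientGroup.mk_surjective a
      obtain ⟨y, rfl⟩ := QuotientGroup.mk_surjective b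
      have h : ((⁅x, y⁆ : G) : G ⧸ K q) = 1 := (QuotientGroup.eq_one_iff _).mpr
        (hcKq (Subgroup.commutator_mem_commutator (Subgroup.mem_top x) (Subgroup.mem_top y)))
      have h' : ⁅(QuotientGroup.mk' (K q) x), (QuotientGroup.mk' (K q) y)⁆ = 1 := by
        rw [← map_commutatorElement]; exact h
      exact (comm_one_iff _ _).mp h' }
  letI : CommGroup (commutator G) := { (inferInstance : Group (commutator G)) with
    mul_comm := by
      intro a b
      apply Subtype.ext
      exact (Subgroup.mem_center_iff.mp (hcc a.2) b).symm }
  letI : Module (ZMod p) (Additive (G ⧸ K q)) := AddCommGroup.zmodModule (by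
    intro v
    obtain ⟨x, hx⟩ := QuotientGroup.mk_surjective v.toMul
    have h : ((x ^ p : G) : G ⧸ K q) = 1 := (QuotientGroup.eq_one_iff _).mpr (by
      rw [hKq, ← pow_mul, mul_comm, pow_mul]
      exact (hcK (hq x)).2)
    have h2 : v.toMul ^ p = 1 := by
      rw [← hx]; exact h
    exact h2)
  letI : Module (ZMod p) (Additive (commutator G)) := AddCommGroup.zmodModule (by
    intro v
    have h2 : v.toMul ^ p = 1 := Subtype.ext (hcK v.toMul.2).2
    exact h2)
  exact core (p := p) (V := Additive (G ⧸ K q)) (W := Additive (commutator G)) hp hE hcard hcl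
    (fun g => Additive.ofMul (QuotientGroup.mk g)) (fun _ _ => rfl)
    (fun v => QuotientGroup.mk_surjective v.toMul)
    (fun w => (w.toMul : G)) (fun _ _ => rfl)
    (fun a b h => Subtype.ext h) (fun w => w.toMul.2)
    (fun d hd => ⟨Additive.ofMul ⟨d, hd⟩, rfl⟩)
    (fun g hg => ((QuotientGroup.eq_one_iff g).mp hg).1) q hq
    (fun g => (QuotientGroup.eq_one_iff g).trans (hKq g)) hqp hqmin hnc

end Final

end GroupTheoryPart

/-- For every prime `p`, every finite `p`-group that is an `E`-group and has
order at most `p ^ 6` is abelian. -/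
theorem pEGroup_card_le_p_pow_six_comm
    (p : ℕ) (hp : p.Prime) {G : Type*} [Group G] [Finite G]
    (hpG : IsPGroup p G) (hE : IsEGroup G) (hcard : Nat.card G ≤ p ^ 6) :
    ∀ x y : G, x * y = y * x := by
  intro x y
  by_contra h
  exact final_step p hp hpG hE hcard ⟨x, y, fun h' => h ((comm_one_iff x y).mp h')⟩
end
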